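/- arXiv:1305.2551 — 3 statements merged into one kernel-verified Lean document; each statement's English description precedes it below -/
import Mathlib

section
/- Let P and Q be finite ranked posets. If both P and Q have the LYM property and are log-concave, then the Cartesian product P × Q has the LYM property and is log-concave. -/
open scoped Classical

/-- The LYM property of a finite ranked poset with rank function `rank`. -/
def PosetLYM {P : Type*} [Fintype P] [PartialOrder P] (rank : P → ℕ) : Prop :=
  ∀ A : Finset P, IsAntichain (· ≤ ·) (A : Set P) →
    ∑ a ∈ A, (1 : ℚ) / (Finset.univ.filter (fun b => rank b = rank a)).card ≤ 1

/-- Log-concavity of the sequence of sizes of the rank levels. -/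
def PosetLogConcave {P : Type*} [Fintype P] [PartialOrder P] (rank : P → ℕ) : Prop :=
  ∀ i : ℕ, (Finset.univ.filter (fun b : P => rank b = i)).card *
      (Finset.univ.filter (fun b : P => rank b = i + 2)).card ≤
    (Finset.univ.filter (fun b : P => rank b = i + 1)).card ^ 2

namespace HK

/-- total weight of the rank k in the grid -/
def Nn (a b : ℕ → ℚ) (k : ℕ) : ℚ := ∑ s ∈ Finset.range (k+1), a s * b (k - s)

/-- partial weight -/
def L (a b : ℕ → ℚ) (i k : ℕ) : ℚ := ∑ s ∈ Finset.range i, a s * b (k - s)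

/-- strong log-concavity -/
def PF (a : ℕ → ℚ) : Prop := (∀ i, 0 ≤ a i) ∧ ∀ i j, i ≤ j → a i * a (j+1) ≤ a (i+1) * a j

lemma PF.gen {a : ℕ → ℚ} (h : PF a) (d : ℕ) : ∀ x y, x ≤ y → a x * a (y+d) ≤ a (x+d) * a y := by
  induction d with
  | zero => intro x y _; simp
  | succ d ih =>
    intro x y hxy
    rcases Nat.eq_or_lt_of_le hxy with rfl | hlt
    · rw [mul_comm]
    · calc a x * a (y + (d+1)) = a x * a ((y+d)+1) := rfl
        _ ≤ a (x+1) * a (y+d) := h.2 _ _ (by omega)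
        _ ≤ a (x+1+d) * a y := ih _ _ hlt
        _ = a (x+(d+1)) * a y := by congr 2; omega

lemma PF.of {a : ℕ → ℚ} (h0 : ∀ i, 0 ≤ a i) (h1 : ∀ i, a i * a (i+2) ≤ a (i+1)^2)
    (h2 : ∀ i j k, i ≤ j → j ≤ k → a i ≠ 0 → a k ≠ 0 → a j ≠ 0) : PF a := by
  refine ⟨h0, fun i j hij => ?_⟩
  induction j, hij using Nat.le_induction with
  | base => rw [mul_comm]
  | succ j hij ih =>
    by_cases hz : a i * a (j+1+1) = 0
    · rw [hz]; exact mul_nonneg (h0 _) (h0 _)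
    · have hi : a i ≠ 0 := left_ne_zero_of_mul hz
      have hj2 : a (j+1+1) ≠ 0 := right_ne_zero_of_mul hz
      have hj : 0 < a j := lt_of_le_of_ne (h0 _) (h2 i j (j+1+1) hij (by omega) hi hj2).symm
      have hj1 : 0 < a (j+1) :=
        lt_of_le_of_ne (h0 _) (h2 i (j+1) (j+1+1) (by omega) (by omega) hi hj2).symm
      have e := mul_le_mul ih (h1 j) (mul_nonneg (h0 _) (h0 _)) (mul_nonneg (h0 _) (h0 _))
      have hp : 0 < a j * a (j+1) := mul_pos hj hj1
      refine le_of_mul_le_mul_right ?_ hp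
      calc a i * a (j+1+1) * (a j * a (j+1)) = a i * a (j+1) * (a j * a (j+2)) := by ring
        _ ≤ _ := e
        _ = _ := by ring

lemma L_add (a b : ℕ → ℚ) {i k : ℕ} (h : i ≤ k+1) :
    Nn a b k = L a b i k + ∑ t ∈ Finset.Ico i (k+1), a t * b (k - t) := by
  unfold Nn L
  rw [Finset.sum_range_add_sum_Ico _ h]

lemma L_mono {a b : ℕ → ℚ} (ha : ∀ i, 0 ≤ a i) (hb : PF b) {i k K : ℕ} (hi : i ≤ k+1) (hk : k ≤ K) :
    L a b i K * Nn a b k ≤ L a b i k * Nn a b K := by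
  have hN : L a b i K + ∑ t ∈ Finset.Ico i (k+1), a t * b (K - t) ≤ Nn a b K := by
    rw [L_add a b (show i ≤ K+1 by omega)]
    refine add_le_add_right ?_ _
    apply Finset.sum_le_sum_of_subset_of_nonneg
    · exact Finset.Ico_subset_Ico_right (by omega)
    · intros; exact mul_nonneg (ha _) (hb.1 _)
  have hL : 0 ≤ L a b i k := Finset.sum_nonneg fun s _ => mul_nonneg (ha _) (hb.1 _)
  refine le_trans ?_ (mul_le_mul_of_nonneg_left hN hL)
  rw [L_add a b hi, mul_add, mul_add, mul_comm (L a b i K)]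
  refine add_le_add_right ?_ _
  unfold L
  rw [Finset.sum_mul_sum, Finset.sum_mul_sum]
  refine Finset.sum_le_sum fun s hs => Finset.sum_le_sum fun t ht => ?_
  rw [Finset.mem_range] at hs
  rw [Finset.mem_Ico] at ht
  have := hb.gen (K - k) (k - t) (k - s) (by omega)
  rw [show k - s + (K - k) = K - s by omega, show k - t + (K-k) = K - t by omega] at this
  calc a s * b (K - s) * (a t * b (k - t)) = a s * a t * (b (k-t) * b (K - s)) := by ring
    _ ≤ a s * a t * (b (K-t) * b (k-s)) :=
      mul_le_mul_of_nonneg_left this (mul_nonneg (ha _) (ha _))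
    _ = _ := by ring

lemma Nn_comm (a b : ℕ → ℚ) (k : ℕ) : Nn a b k = Nn b a k := by
  unfold Nn
  rw [← Finset.sum_range_reflect]
  refine Finset.sum_congr rfl fun s hs => ?_
  rw [Finset.mem_range] at hs
  rw [show k + 1 - 1 - s = k - s by omega, show k - (k - s) = s by omega, mul_comm]

lemma L_compl (a b : ℕ → ℚ) (i j : ℕ) :
    L a b (i+1) (i+j) + L b a j (i+j) = Nn a b (i+j) := by
  rw [L_add a b (show i+1 ≤ i+j+1 by omega)]
  congr 1
  unfold L
  rw [Finset.sum_Ico_eq_sum_range, ← Finset.sum_range_reflect, show i+j+1-(i+1) = j by omega]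
  refine Finset.sum_congr rfl fun s hs => ?_
  rw [Finset.mem_range] at hs
  rw [show i + j - (j - 1 - s) = i + 1 + s by omega,
    show i + j - (i + 1 + s) = j - 1 - s by omega, mul_comm]

lemma Nn_pos {a b : ℕ → ℚ} (ha : ∀ i, 0 ≤ a i) (hb : ∀ i, 0 ≤ b i) {i j : ℕ} (hi : 0 < a i)
    (hj : 0 < b j) : 0 < Nn a b (i+j) := by
  refine Finset.sum_pos' (fun s _ => mul_nonneg (ha _) (hb _)) ⟨i, by simp, ?_⟩
  simpa using mul_pos hi hj

lemma G_mono {a b : ℕ → ℚ} (ha : PF a) (hb : PF b) {i j I J : ℕ} (hiI : i ≤ I) (hJj : J ≤ j)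
    (h1 : 0 < Nn a b (i+j)) (h2 : 0 < Nn a b (i+J)) (h3 : 0 < Nn a b (I+J)) :
    L a b (i+1) (i+j) / Nn a b (i+j) ≤ L a b (I+1) (I+J) / Nn a b (I+J) := by
  have e1 := L_mono (i := i+1) (k := i+J) (K := i+j) ha.1 hb (by omega) (by omega)
  have e2 := L_mono (i := J) (k := i+J) (K := I+J) hb.1 ha (by omega) (by omega)
  have c1 := L_compl a b i J
  have c2 := L_compl a b I J
  rw [Nn_comm b a, Nn_comm b a] at e2
  refine le_trans ((div_le_div_iff₀ h1 h2).2 e1) ?_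
  rw [div_le_div_iff₀ h2 h3, eq_sub_of_add_eq c1, eq_sub_of_add_eq c2]
  linarith

lemma pos_between {a : ℕ → ℚ} (ha : PF a) {x y z : ℕ} (hxy : x ≤ y) (hyz : y ≤ z) (hx : 0 < a x)
    (hz : 0 < a z) : 0 < a y := by
  have := ha.gen (y - x) x (z - (y - x)) (by omega)
  rw [show z - (y - x) + (y-x) = z by omega, show x + (y-x) = y by omega] at this
  have h := lt_of_lt_of_le (mul_pos hx hz) this
  exact lt_of_le_of_ne (ha.1 _) fun h0 => by rw [← h0] at h; simp at h

lemma grid_aux {a b : ℕ → ℚ} (ha : PF a) (hb : PF b) : ∀ (n : ℕ) (S : Finset (ℕ × ℕ)), S.card = n →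
    (∀ p ∈ S, 0 < a p.1 ∧ 0 < b p.2) →
    (∀ p ∈ S, ∀ q ∈ S, p ≠ q → ¬ (p.1 ≤ q.1 ∧ p.2 ≤ q.2)) →
    ∀ p ∈ S, (∀ q ∈ S, q.1 ≤ p.1) →
    ∑ q ∈ S, a q.1 * b q.2 / Nn a b (q.1 + q.2) ≤ L a b (p.1+1) (p.1+p.2) / Nn a b (p.1+p.2) := by
  intro n
  induction n with
  | zero => intro S hS _ _ p hp; rw [Finset.card_eq_zero] at hS; simp [hS] at hp
  | succ n ih =>
    intro S hS hpos hanti p hp hmax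
    have hpp := hpos p hp
    have hNp := Nn_pos ha.1 hb.1 hpp.1 hpp.2
    rw [← Finset.add_sum_erase S _ hp]
    have hL : L a b (p.1+1) (p.1+p.2) = L a b p.1 (p.1+p.2) + a p.1 * b p.2 := by
      unfold L; rw [Finset.sum_range_succ]; simp
    rw [hL, add_div, add_comm]
    refine add_le_add_left ?_ _
    rcases (S.erase p).eq_empty_or_nonempty with he | hne
    · rw [he, Finset.sum_empty]
      exact div_nonneg (Finset.sum_nonneg fun s _ => mul_nonneg (ha.1 _) (hb.1 _)) hNp.le
    · obtain ⟨p', hp', hmax'⟩ := Finset.exists_max_image (S.erase p) (fun q => q.1) hne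
      have hp'S := Finset.mem_of_mem_erase hp'
      have hne' := Finset.ne_of_mem_erase hp'
      have := ih (S.erase p) (by rw [Finset.card_erase_of_mem hp, hS]; rfl)
        (fun q hq => hpos q (Finset.mem_of_mem_erase hq))
        (fun q hq r hr => hanti q (Finset.mem_of_mem_erase hq) r (Finset.mem_of_mem_erase hr))
        p' hp' hmax'
      refine this.trans ?_
      have x1 := hanti p' hp'S p hp hne'
      have x2 := hanti p hp p' hp'S hne'.symm
      have x3 := hmax p' hp'S
      have hlt : p.2 < p'.2 := by by_contra h; exact x1 ⟨x3, by omega⟩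
      have hlt1 : p'.1 < p.1 := by by_contra h; exact x2 ⟨by omega, hlt.le⟩
      have hpp' := hpos p' hp'S
      have pa : 0 < a (p.1 - 1) := pos_between ha (x := p'.1) (z := p.1) (by omega) (by omega) hpp'.1 hpp.1
      have pb : 0 < b (p.2 + 1) := pos_between hb (x := p.2) (z := p'.2) (by omega) (by omega) hpp.2 hpp'.2
      have := G_mono ha hb (i := p'.1) (j := p'.2) (I := p.1 - 1) (J := p.2 + 1) (by omega) (by omega)
        (Nn_pos ha.1 hb.1 hpp'.1 hpp'.2) (Nn_pos ha.1 hb.1 hpp'.1 pb) (Nn_pos ha.1 hb.1 pa pb)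
      rwa [show p.1 - 1 + 1 = p.1 by omega, show p.1 - 1 + (p.2 + 1) = p.1 + p.2 by omega] at this

lemma grid {a b : ℕ → ℚ} (ha : PF a) (hb : PF b) (S : Finset (ℕ × ℕ))
    (hpos : ∀ p ∈ S, 0 < a p.1 ∧ 0 < b p.2)
    (hanti : ∀ p ∈ S, ∀ q ∈ S, p ≠ q → ¬ (p.1 ≤ q.1 ∧ p.2 ≤ q.2)) :
    ∑ q ∈ S, a q.1 * b q.2 / Nn a b (q.1 + q.2) ≤ 1 := by
  rcases S.eq_empty_or_nonempty with he | hne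
  · simp [he]
  · obtain ⟨p, hp, hmax⟩ := Finset.exists_max_image S (fun q => q.1) hne
    refine (grid_aux ha hb _ S rfl hpos hanti p hp hmax).trans ?_
    have hpp := hpos p hp
    rw [div_le_one (Nn_pos ha.1 hb.1 hpp.1 hpp.2), ← L_compl]
    have : 0 ≤ L b a p.2 (p.1+p.2) := Finset.sum_nonneg fun s _ => mul_nonneg (hb.1 _) (ha.1 _)
    linarith

/-- shift -/
def sh (a : ℕ → ℚ) (n : ℕ) : ℚ := if n = 0 then 0 else a (n-1)

lemma sh_le {a : ℕ → ℚ} (ha : PF a) {i j : ℕ} (h : i ≤ j) : sh a i * a j ≤ a i * sh a j := by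
  rcases Nat.eq_zero_or_pos i with rfl | hi
  · simp only [sh, if_true, zero_mul]
    split_ifs
    · simp
    · exact mul_nonneg (ha.1 _) (ha.1 _)
  · have := ha.2 (i-1) (j-1) (by omega)
    rw [show j - 1 + 1 = j by omega, show i - 1 + 1 = i by omega] at this
    simpa [sh, show i ≠ 0 by omega, show j ≠ 0 by omega] using this

lemma Nn_anti (a b : ℕ → ℚ) (k : ℕ) :
    Nn a b k = ∑ p ∈ Finset.HasAntidiagonal.antidiagonal k, a p.1 * b p.2 := by
  rw [Finset.Nat.sum_antidiagonal_eq_sum_range_succ (fun i j => a i * b j)]; rfl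

lemma sh_left (a b : ℕ → ℚ) (k : ℕ) : Nn (sh a) b (k+1) = Nn a b k := by
  rw [Nn_anti, Nn_anti, Finset.Nat.sum_antidiagonal_succ]
  simp [sh]

lemma sh_right (a b : ℕ → ℚ) (k : ℕ) : Nn a (sh b) (k+1) = Nn a b k := by
  rw [Nn_comm, sh_left, Nn_comm]

lemma logc {a b : ℕ → ℚ} (ha : PF a) (hb : PF b) (k : ℕ) :
    Nn a b k * Nn a b (k+2) ≤ Nn a b (k+1) ^ 2 := by
  have e0 : Nn a b k = Nn (sh a) (sh b) (k+2) := by rw [sh_right, sh_left]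
  have e1 : Nn a b (k+1) = Nn (sh a) b (k+2) := by rw [sh_left]
  have e2 : Nn a b (k+1) = Nn a (sh b) (k+2) := by rw [sh_right]
  have key : 0 ≤ ∑ p ∈ Finset.HasAntidiagonal.antidiagonal (k+2), ∑ q ∈ Finset.HasAntidiagonal.antidiagonal (k+2),
      (b p.2 * sh b q.2 - b q.2 * sh b p.2) * (sh a p.1 * a q.1 - a p.1 * sh a q.1) := by
    refine Finset.sum_nonneg fun p hp => Finset.sum_nonneg fun q hq => ?_
    rw [Finset.HasAntidiagonal.mem_antidiagonal] at hp hq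
    rcases le_total p.1 q.1 with h | h
    · have f1 := sh_le ha h
      have f2 := sh_le hb (show q.2 ≤ p.2 by omega)
      exact mul_nonneg_of_nonpos_of_nonpos (by linarith) (by linarith)
    · have f1 := sh_le ha h
      have f2 := sh_le hb (show p.2 ≤ q.2 by omega)
      exact mul_nonneg (by linarith) (by linarith)
  have e : ∑ p ∈ Finset.HasAntidiagonal.antidiagonal (k+2), ∑ q ∈ Finset.HasAntidiagonal.antidiagonal (k+2),
      (b p.2 * sh b q.2 - b q.2 * sh b p.2) * (sh a p.1 * a q.1 - a p.1 * sh a q.1)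
      = 2 * (Nn (sh a) b (k+2) * Nn a (sh b) (k+2) - Nn a b (k+2) * Nn (sh a) (sh b) (k+2)) := by
    have r : ∀ p q : ℕ × ℕ,
      (b p.2 * sh b q.2 - b q.2 * sh b p.2) * (sh a p.1 * a q.1 - a p.1 * sh a q.1)
      = (sh a p.1 * b p.2) * (a q.1 * sh b q.2) - (a p.1 * b p.2) * (sh a q.1 * sh b q.2)
       - (sh a p.1 * sh b p.2) * (a q.1 * b q.2) + (a p.1 * sh b p.2) * (sh a q.1 * b q.2) := by
      intros; ring
    simp only [r, Finset.sum_add_distrib, Finset.sum_sub_distrib, ← Finset.sum_mul_sum, ← Nn_anti]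
    ring
  rw [e] at key
  rw [sq]
  nth_rewrite 1 [e1]
  rw [e2, e0]
  linarith

lemma frac {P : Type*} [Fintype P] [PartialOrder P] (w : P → ℚ)
    (hw : ∀ A : Finset P, IsAntichain (· ≤ ·) (A : Set P) → ∑ a ∈ A, w a ≤ 1) :
    ∀ (n : ℕ) (f : P → ℚ), (∀ x, 0 ≤ f x) → (Finset.univ.filter (fun x => f x ≠ 0)).card = n →
    ∀ M : ℚ, (∀ C : Finset P, IsChain (· ≤ ·) (C : Set P) → ∑ x ∈ C, f x ≤ M) →
    ∑ x, f x * w x ≤ M := by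
  intro n
  induction n using Nat.strong_induction_on with
  | _ n ih =>
  intro f hf hn M hM
  set T := Finset.univ.filter (fun x => f x ≠ 0) with hT
  have memT : ∀ x, x ∈ T ↔ f x ≠ 0 := by intro x; simp [hT]
  rcases T.eq_empty_or_nonempty with he | hne
  · have h0 : ∀ x, f x = 0 := by
      intro x; by_contra h; have := (memT x).2 h; simp [he] at this
    simpa [h0] using hM ∅ (by simp)
  set A := T.filter (fun x => ∀ y ∈ T, ¬ y < x) with hA
  have minT : ∀ x ∈ T, ∃ a ∈ A, a ≤ x := by
    intro x hx
    obtain ⟨a, hax, ha⟩ := T.exists_le_minimal hx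
    refine ⟨a, ?_, hax⟩
    rw [hA, Finset.mem_filter]
    exact ⟨ha.1, fun y hy hlt => ha.not_lt hy hlt⟩
  have Aanti : IsAntichain (· ≤ ·) (A : Set P) := by
    intro x hx y hy hxy hle
    have hx' := Finset.mem_filter.1 (Finset.mem_coe.1 hx)
    have hy' := Finset.mem_filter.1 (Finset.mem_coe.1 hy)
    exact hy'.2 x hx'.1 (lt_of_le_of_ne hle hxy)
  have Ane : A.Nonempty := by
    obtain ⟨x, hx⟩ := hne
    obtain ⟨a, ha, _⟩ := minT x hx
    exact ⟨a, ha⟩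
  have AT : ∀ x ∈ A, x ∈ T := fun x hx => (Finset.mem_filter.1 hx).1
  obtain ⟨a0, ha0, hmin⟩ := Finset.exists_min_image A f Ane
  set ε := f a0 with hε
  have εpos : 0 < ε := lt_of_le_of_ne (hf _) ((memT _).1 (AT _ ha0)).symm
  set g : P → ℚ := fun x => f x - if x ∈ A then ε else 0 with hg
  have g0 : ∀ x, 0 ≤ g x := by
    intro x
    simp only [hg]
    split_ifs with h
    · linarith [hmin x h]
    · linarith [hf x]
  have gT : ∀ x, g x ≠ 0 → x ∈ T := by
    intro x hx
    by_contra h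
    have h1 : x ∉ A := fun h' => h (AT x h')
    have h2 : f x = 0 := by by_contra h3; exact h ((memT x).2 h3)
    simp [hg, h1, h2] at hx
  have gfle : ∀ x, g x ≤ f x := by
    intro x; simp only [hg]; split_ifs <;> linarith
  have hcard : (Finset.univ.filter (fun x => g x ≠ 0)).card < n := by
    rw [← hn]
    apply Finset.card_lt_card
    refine ⟨fun x hx => gT x (Finset.mem_filter.1 hx).2, fun h => ?_⟩
    have := (Finset.mem_filter.1 (h (AT _ ha0))).2
    simp [hg, ha0, hε] at this
  have main : ∑ x, g x * w x ≤ M - ε := by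
    refine ih _ hcard g g0 rfl (M - ε) ?_
    intro C hC
    set D := C.filter (fun x => g x ≠ 0) with hD
    have hDC : ∑ x ∈ C, g x = ∑ x ∈ D, g x := by
      rw [hD, Finset.sum_filter_ne_zero]
    rw [hDC]
    have hDch : IsChain (· ≤ ·) (D : Set P) := hC.mono (by
      intro x hx; exact (Finset.mem_filter.1 (Finset.mem_coe.1 hx)).1)
    have hDT : ∀ x ∈ D, x ∈ T := fun x hx => gT x (Finset.mem_filter.1 hx).2
    by_cases hmeet : ∃ a ∈ A, a ∈ D
    · obtain ⟨a, haA, haD⟩ := hmeet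
      have h1 := hM D hDch
      rw [← Finset.add_sum_erase D _ haD] at h1 ⊢
      have h2 : ∑ x ∈ D.erase a, g x ≤ ∑ x ∈ D.erase a, f x := Finset.sum_le_sum fun x _ => gfle x
      have h3 : g a = f a - ε := by simp [hg, haA]
      linarith
    · have h2 : ∑ x ∈ D, g x ≤ ∑ x ∈ D, f x := Finset.sum_le_sum fun x _ => gfle x
      have : ∃ a ∈ A, ∀ x ∈ D, a ≤ x := by
        rcases D.eq_empty_or_nonempty with hd | hd
        · exact ⟨a0, ha0, by simp [hd]⟩
        · obtain ⟨m, hm⟩ := D.exists_minimal hd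
          obtain ⟨a, ha, ham⟩ := minT m (hDT m hm.1)
          refine ⟨a, ha, fun x hx => ham.trans ?_⟩
          rcases hDch.total hm.1 hx with h | h
          · exact h
          · exact hm.2 hx h
      obtain ⟨a, haA, hle⟩ := this
      have haD : a ∉ D := fun h => hmeet ⟨a, haA, h⟩
      have h1 := hM (insert a D) (by
        rw [Finset.coe_insert]
        exact hDch.insert (fun b hb _ => Or.inl (hle b hb)))
      rw [Finset.sum_insert haD] at h1
      linarith [hmin a haA]
  have hsum : ∑ x, f x * w x = ∑ x, g x * w x + ε * ∑ x ∈ A, w x := by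
    have : ∀ x, f x * w x = g x * w x + if x ∈ A then ε * w x else 0 := by
      intro x; simp only [hg]; split_ifs <;> ring
    simp only [this, Finset.sum_add_distrib]
    rw [Finset.mul_sum, Finset.sum_ite_mem, Finset.univ_inter]
  rw [hsum]
  have := mul_le_mul_of_nonneg_left (hw A Aanti) εpos.le
  linarith

section rank
variable {P : Type*} [Fintype P] [PartialOrder P] (r : P → ℕ)

/-- level sizes -/
noncomputable def lev (i : ℕ) : ℚ := ((Finset.univ.filter (fun b : P => r b = i)).card : ℚ)

lemma lev_pos (x : P) : 0 < lev r (r x) := by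
  unfold lev
  rw [Nat.cast_pos, Finset.card_pos]
  exact ⟨x, by simp⟩

lemma exists_of_lev {i : ℕ} (h : lev r i ≠ 0) : ∃ x, r x = i := by
  unfold lev at h
  rw [Nat.cast_ne_zero, ← Nat.pos_iff_ne_zero, Finset.card_pos] at h
  obtain ⟨x, hx⟩ := h
  exact ⟨x, by simpa using hx⟩

variable {r}

lemma exists_covBy {a b : P} (h : a < b) : ∃ c, a ⋖ c ∧ c ≤ b := by
  obtain ⟨c, hc, hm⟩ := (Finset.univ.filter (fun x => a < x)).exists_le_minimal
    (show b ∈ _ by simpa using h)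
  refine ⟨c, ⟨by simpa using hm.1, fun d hd hdc => hm.not_lt (by simpa using hd) hdc⟩, hc⟩

lemma rank_between (hr : ∀ a b : P, a ⋖ b → r b = r a + 1) (b : P) : ∀ a, a ≤ b →
    r a ≤ r b ∧ (a ≠ b → r a < r b) ∧ ∀ k, r a ≤ k → k ≤ r b → ∃ c, r c = k := by
  intro a
  induction a using (wellFounded_gt (α := P)).induction with
  | _ a ih =>
  intro hab
  rcases eq_or_lt_of_le hab with rfl | hlt
  · exact ⟨le_rfl, fun h => absurd rfl h, fun k h1 h2 => ⟨a, by omega⟩⟩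
  · obtain ⟨c, hac, hcb⟩ := exists_covBy hlt
    obtain ⟨h1, _, h3⟩ := ih c hac.lt hcb
    have := hr a c hac
    refine ⟨by omega, fun _ => by omega, fun k hk1 hk2 => ?_⟩
    rcases Nat.eq_or_lt_of_le hk1 with h | h
    · exact ⟨a, h⟩
    · exact h3 k (by omega) hk2

lemma lym_lev (h : PosetLYM r) (A : Finset P) (hA : IsAntichain (· ≤ ·) (A : Set P)) :
    ∑ a ∈ A, 1 / lev r (r a) ≤ 1 := h A hA

lemma pf_lev (hr : ∀ a b : P, a ⋖ b → r b = r a + 1) (h : PosetLYM r) (hc : PosetLogConcave r) :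
    PF (lev r) := by
  refine PF.of (fun i => Nat.cast_nonneg _) (fun i => ?_) ?_
  · unfold lev; exact_mod_cast hc i
  · intro i j k hij hjk hi hk
    obtain ⟨x, rfl⟩ := exists_of_lev r hi
    obtain ⟨z, rfl⟩ := exists_of_lev r hk
    suffices ∃ c, r c = j by
      obtain ⟨c, rfl⟩ := this
      exact (lev_pos r c).ne'
    rcases Nat.eq_or_lt_of_le (hij.trans hjk) with he | hlt
    · exact ⟨x, by omega⟩
    by_cases hex : ∃ y, r y = r z ∧ x ≤ y
    · obtain ⟨y, hy, hxy⟩ := hex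
      exact (rank_between hr y x hxy).2.2 j hij (by omega)
    · exfalso
      set Z := Finset.univ.filter (fun b : P => r b = r z) with hZ
      have hxZ : x ∉ Z := by simp [hZ]; omega
      have mZ : ∀ y ∈ Z, r y = r z := fun y hy => by simpa [hZ] using hy
      have hanti : IsAntichain (· ≤ ·) ((insert x Z : Finset P) : Set P) := by
        intro u hu v hv huv hle
        have hlt' := (rank_between hr v u hle).2.1 huv
        rcases Finset.mem_insert.1 (Finset.mem_coe.1 hu) with rfl | hu' <;>
        rcases Finset.mem_insert.1 (Finset.mem_coe.1 hv) with rfl | hv'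
        · exact huv rfl
        · exact hex ⟨v, mZ v hv', hle⟩
        · have := mZ u hu'; omega
        · have := mZ u hu'; have := mZ v hv'; omega
      have := lym_lev h _ hanti
      rw [Finset.sum_insert hxZ, Finset.sum_congr rfl (fun y hy => by rw [mZ y hy]),
        Finset.sum_const, nsmul_eq_mul] at this
      have hp := lev_pos r x
      have e : (Z.card : ℚ) * (1 / lev r (r z)) = 1 := by
        rw [mul_one_div]; exact div_self hk
      rw [e] at this
      have : 0 < 1 / lev r (r x) := by positivity
      linarith

end rank

lemma lev_prod {P Q : Type*} [Fintype P] [PartialOrder P] [Fintype Q] [PartialOrder Q]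
    (r : P → ℕ) (s : Q → ℕ) (k : ℕ) :
    lev (fun x : P × Q => r x.1 + s x.2) k = Nn (lev r) (lev s) k := by
  rw [Nn_anti]
  unfold lev
  rw [Finset.card_eq_sum_card_fiberwise (f := fun x : P × Q => (r x.1, s x.2))
    (t := Finset.HasAntidiagonal.antidiagonal k) (by intro x hx; simpa using hx)]
  push_cast
  refine Finset.sum_congr rfl fun p hp => ?_
  rw [← Nat.cast_mul, ← Finset.card_product]
  congr 2
  ext ⟨x, y⟩
  rw [Finset.HasAntidiagonal.mem_antidiagonal] at hp
  simp only [Finset.mem_filter, Finset.mem_univ, true_and, Finset.mem_product, Prod.ext_iff]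
  constructor
  · rintro ⟨_, h⟩; exact h
  · rintro ⟨h1, h2⟩; exact ⟨by omega, h1, h2⟩

end HK

/-- The product theorem of Harper and Hsieh–Kleitman: if finite ranked posets
`P` and `Q` have the LYM property and are log-concave, then so does their
Cartesian product `P × Q` (ordered componentwise, with rank the sum of ranks). -/
theorem stmt8 {P Q : Type*} [Fintype P] [PartialOrder P] [Fintype Q] [PartialOrder Q]
    (rankP : P → ℕ) (hrankP : ∀ a b : P, a ⋖ b → rankP b = rankP a + 1)
    (rankQ : Q → ℕ) (hrankQ : ∀ a b : Q, a ⋖ b → rankQ b = rankQ a + 1)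
    (hP : PosetLYM rankP ∧ PosetLogConcave rankP)
    (hQ : PosetLYM rankQ ∧ PosetLogConcave rankQ) :
    PosetLYM (fun x : P × Q => rankP x.1 + rankQ x.2)
      ∧ PosetLogConcave (fun x : P × Q => rankP x.1 + rankQ x.2) := by
  classical
  have ha := HK.pf_lev hrankP hP.1 hP.2
  have hb := HK.pf_lev hrankQ hQ.1 hQ.2
  refine ⟨?_, ?_⟩
  · intro A hA
    set a := HK.lev rankP with ha'
    set b := HK.lev rankQ with hb'
    have e : ∀ x ∈ A, (1 : ℚ) / (Finset.univ.filter
        (fun y : P × Q => rankP y.1 + rankQ y.2 = rankP x.1 + rankQ x.2)).card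
        = 1 / HK.Nn a b (rankP x.1 + rankQ x.2) := by
      intro x _
      rw [← HK.lev_prod]; rfl
    refine le_trans (le_of_eq (Finset.sum_congr rfl e)) ?_
    set W : P → Q → ℚ := fun x y =>
      if (x, y) ∈ A then 1 / HK.Nn a b (rankP x + rankQ y) else 0 with hW
    have pa : ∀ x, 0 < a (rankP x) := HK.lev_pos rankP
    have pb : ∀ y, 0 < b (rankQ y) := HK.lev_pos rankQ
    have W0 : ∀ x y, 0 ≤ W x y := by
      intro x y
      simp only [hW]
      split_ifs
      · exact (one_div_pos.2 (HK.Nn_pos ha.1 hb.1 (pa x) (pb y))).le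
      · exact le_rfl
    have e1 : ∑ x ∈ A, 1 / HK.Nn a b (rankP x.1 + rankQ x.2)
        = ∑ x, (a (rankP x) * ∑ y, W x y) * (1 / a (rankP x)) := by
      have : ∀ x, (a (rankP x) * ∑ y, W x y) * (1 / a (rankP x)) = ∑ y, W x y := by
        intro x; have := (pa x).ne'; field_simp
      simp only [this]
      rw [← Fintype.sum_prod_type']
      simp only [hW]
      rw [Finset.sum_ite_mem, Finset.univ_inter]
    rw [e1]
    refine HK.frac (fun x => 1 / a (rankP x)) (HK.lym_lev hP.1) _ _
      (fun x => mul_nonneg (pa x).le (Finset.sum_nonneg fun y _ => W0 x y)) rfl 1 ?_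
    intro C hC
    have e2 : ∑ x ∈ C, a (rankP x) * ∑ y, W x y
        = ∑ y, (∑ x ∈ C, a (rankP x) * b (rankQ y) * W x y) * (1 / b (rankQ y)) := by
      simp only [Finset.mul_sum, Finset.sum_mul]
      rw [Finset.sum_comm]
      refine Finset.sum_congr rfl fun y _ => Finset.sum_congr rfl fun x _ => ?_
      have := (pb y).ne'
      field_simp
    rw [e2]
    refine HK.frac (fun y => 1 / b (rankQ y)) (HK.lym_lev hQ.1) _ _
      (fun y => Finset.sum_nonneg fun x _ => mul_nonneg (mul_nonneg (pa x).le (pb y).le) (W0 x y))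
      rfl 1 ?_
    intro D hD
    have mono : ∀ x ∈ C, ∀ x' ∈ C, rankP x ≤ rankP x' → x ≤ x' := by
      intro x hx x' hx' h
      rcases hC.total hx hx' with h' | h'
      · exact h'
      · by_contra hne
        have := (HK.rank_between hrankP x x' h').2.1 (fun h => hne h.ge)
        omega
    have mono' : ∀ x ∈ D, ∀ x' ∈ D, rankQ x ≤ rankQ x' → x ≤ x' := by
      intro x hx x' hx' h
      rcases hD.total hx hx' with h' | h'
      · exact h'
      · by_contra hne
        have := (HK.rank_between hrankQ x x' h').2.1 (fun h => hne h.ge)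
        omega
    set B := (C ×ˢ D).filter (fun x => x ∈ A) with hB
    have memB : ∀ x, x ∈ B → x.1 ∈ C ∧ x.2 ∈ D ∧ x ∈ A := by
      intro x hx
      rw [hB, Finset.mem_filter, Finset.mem_product] at hx
      exact ⟨hx.1.1, hx.1.2, hx.2⟩
    have key : ∀ x ∈ B, ∀ y ∈ B, rankP x.1 ≤ rankP y.1 → rankQ x.2 ≤ rankQ y.2 → x = y := by
      intro x hx y hy h1 h2
      obtain ⟨hx1, hx2, hx3⟩ := memB x hx
      obtain ⟨hy1, hy2, hy3⟩ := memB y hy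
      by_contra hne
      exact hA hx3 hy3 hne ⟨mono _ hx1 _ hy1 h1, mono' _ hx2 _ hy2 h2⟩
    have g := HK.grid ha hb (B.image (fun x => (rankP x.1, rankQ x.2)))
      (by
        intro p hp
        obtain ⟨x, _, rfl⟩ := Finset.mem_image.1 hp
        exact ⟨pa _, pb _⟩)
      (by
        intro p hp q hq hne hle
        obtain ⟨x, hx, rfl⟩ := Finset.mem_image.1 hp
        obtain ⟨y, hy, rfl⟩ := Finset.mem_image.1 hq
        exact hne (by rw [key x hx y hy hle.1 hle.2]))
    rw [Finset.sum_image (by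
      intro x hx y hy h
      rw [Prod.ext_iff] at h
      exact key x hx y hy h.1.le h.2.le)] at g
    refine le_trans (le_of_eq ?_) g
    rw [Finset.sum_comm, ← Finset.sum_product', hB, Finset.sum_filter]
    refine Finset.sum_congr rfl fun x _ => ?_
    simp only [hW]
    split_ifs
    · rw [mul_one_div]
    · rw [mul_zero]
  · intro i
    have := HK.logc ha hb i
    rw [← HK.lev_prod, ← HK.lev_prod, ← HK.lev_prod] at this
    unfold HK.lev at this
    exact_mod_cast this
end

section
/- If a monomial Artinian K-algebra A = S/I has a unimodal Hilbert function and has a full matching at degree k for every k ≥ 0, then A has the Sperner property. -/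
open MvPolynomial

/-- The minimal number of generators of an ideal. -/
noncomputable def mu {R : Type*} [CommRing R] (I : Ideal R) : ℕ :=
  sInf {k | ∃ s : Finset R, s.card = k ∧ Ideal.span (s : Set R) = I}

/-- The graded maximal ideal `(x₁, …, xₙ)` of `K[x₁, …, xₙ]`. -/
noncomputable def mm (K : Type*) [Field K] (n : ℕ) : Ideal (MvPolynomial (Fin n) K) :=
  Ideal.span (Set.range X)

/-- `I` is `m`-full: `mI : y = I` for some `y ∈ m`. -/
def IsMFull {R : Type*} [CommRing R] (m I : Ideal R) : Prop :=
  ∃ y ∈ m, (m * I).colon (Ideal.span {y}) = I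

/-- A homogeneous ideal: one containing all homogeneous components of its elements. -/
def IsHomog {K : Type*} [Field K] {n : ℕ} (I : Ideal (MvPolynomial (Fin n) K)) : Prop :=
  ∀ f ∈ I, ∀ k : ℕ, homogeneousComponent k f ∈ I

/-- `dim_K (S/I)_k`, the dimension of the degree `k` part of `S/I`. -/
noncomputable def hdim (K : Type*) [Field K] (n : ℕ)
    (I : Ideal (MvPolynomial (Fin n) K)) (k : ℕ) : ℕ :=
  Module.finrank K (Submodule.map (Ideal.Quotient.mkₐ K I).toLinearMap
    (homogeneousSubmodule (Fin n) K k))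

/-- The total degree of an exponent vector. -/
def mdeg {n : ℕ} (d : Fin n →₀ ℕ) : ℕ := d.sum fun _ e => e

/-- `M_k(S/I)`: the exponent vectors of degree `k` monomials not in `I`. -/
def MSet (K : Type*) [Field K] {n : ℕ} (I : Ideal (MvPolynomial (Fin n) K)) (k : ℕ) :
    Set (Fin n →₀ ℕ) := {d | mdeg d = k ∧ (monomial d (1 : K)) ∉ I}

/-- `I` is a monomial ideal. -/
def IsMonomialIdeal {K : Type*} [Field K] {n : ℕ} (I : Ideal (MvPolynomial (Fin n) K)) : Prop :=
  ∀ f ∈ I, ∀ d ∈ f.support, (monomial d (1 : K)) ∈ I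

/-- The LYM property of the divisibility poset of monomials outside `I`,
ranked by degree.  (Divisibility of monomials is the pointwise order `≤` on
exponent vectors.) -/
def MLYM (K : Type*) [Field K] {n : ℕ} (I : Ideal (MvPolynomial (Fin n) K)) : Prop :=
  ∀ F : Finset (Fin n →₀ ℕ), (∀ d ∈ F, (monomial d (1 : K)) ∉ I) →
    IsAntichain (· ≤ ·) (F : Set (Fin n →₀ ℕ)) →
    ∑ d ∈ F, (1 : ℚ) / (MSet K I (mdeg d)).ncard ≤ 1

/-- The Sperner property of the Artinian algebra `S/I`:
the maximal number of generators of an ideal of `S/I` equals the maximal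
value of the Hilbert function of `S/I`. -/
def SpernerAlg {K : Type*} [Field K] {n : ℕ} (I : Ideal (MvPolynomial (Fin n) K)) : Prop :=
  sSup {m | ∃ J : Ideal (MvPolynomial (Fin n) K ⧸ I), mu J = m}
    = sSup (Set.range (hdim K n I))

/-- `S/I` has a full matching at degree `k`: a matching in the bipartite graph
on `M_{k-1}(A) × M_k(A)` given by divisibility, of the maximal possible size
`min(#M_{k-1}(A), #M_k(A))`. -/
def HasFullMatching (K : Type*) [Field K] {n : ℕ}
    (I : Ideal (MvPolynomial (Fin n) K)) (k : ℕ) : Prop :=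
  ∃ M : Finset ((Fin n →₀ ℕ) × (Fin n →₀ ℕ)),
    (∀ q ∈ M, q.1 ∈ MSet K I (k - 1) ∧ q.2 ∈ MSet K I k ∧ q.1 ≤ q.2) ∧
    (∀ q ∈ M, ∀ q' ∈ M, q ≠ q' → q.1 ≠ q'.1 ∧ q.2 ≠ q'.2) ∧
    M.card = min (MSet K I (k - 1)).ncard (MSet K I k).ncard

lemma mdeg_eq {n : ℕ} (d : Fin n →₀ ℕ) : mdeg d = d.degree := rfl

lemma MSet_finite (K : Type*) [Field K] {n : ℕ} (I : Ideal (MvPolynomial (Fin n) K)) (k : ℕ) :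
    (MSet K I k).Finite := by
  refine (Finsupp.finite_of_degree_le (σ := Fin n) k).subset ?_
  rintro d ⟨h, -⟩
  exact (mdeg_eq d ▸ h).le

lemma hdim_eq {K : Type*} [Field K] {n : ℕ} (I : Ideal (MvPolynomial (Fin n) K))
    (hmon : IsMonomialIdeal I) (k : ℕ) : hdim K n I k = (MSet K I k).ncard := by
  classical
  haveI : Fintype (MSet K I k) := (MSet_finite K I k).fintype
  set q := (Ideal.Quotient.mkₐ K I).toLinearMap with hq
  let v : MSet K I k → (MvPolynomial (Fin n) K ⧸ I) := fun d => q (monomial d.1 1)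
  have hqz : ∀ f, q f = 0 ↔ f ∈ I := fun f => Ideal.Quotient.eq_zero_iff_mem
  have hli : LinearIndependent K v := by
    rw [Fintype.linearIndependent_iff]
    intro g hg d
    have h1 : q (∑ i, g i • monomial i.1 (1 : K)) = 0 := by
      rw [map_sum, ← hg]
      simp only [map_smul, v]
    rw [hqz] at h1
    by_contra hne
    refine d.2.2 (hmon _ h1 d.1 ?_)
    rw [mem_support_iff]
    have : coeff d.1 (∑ i, g i • monomial i.1 (1 : K)) = g d := by
      rw [coeff_sum, Finset.sum_eq_single d]
      · simp
      · intro b _ hb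
        have : b.1 ≠ d.1 := fun h => hb (Subtype.ext h)
        simp [coeff_monomial, this]
      · simp
    rwa [this]
  have hspan : Submodule.map q (homogeneousSubmodule (Fin n) K k)
      = Submodule.span K (Set.range v) := by
    apply le_antisymm
    · rintro _ ⟨f, hf, rfl⟩
      rw [f.as_sum, map_sum]
      refine Submodule.sum_mem _ fun d hd => ?_
      have hdk : mdeg d = k := by
        rw [mdeg_eq, Finsupp.degree_eq_weight_one]
        exact hf (mem_support_iff.1 hd)
      by_cases hI : monomial d (1 : K) ∈ I
      · have : q (monomial d (coeff d f)) = 0 := by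
          rw [hqz, ← mul_one (coeff d f), ← smul_eq_mul, ← smul_monomial, smul_eq_C_mul]
          exact I.mul_mem_left _ hI
        rw [this]; exact zero_mem _
      · have : q (monomial d (coeff d f)) = coeff d f • v ⟨d, hdk, hI⟩ := by
          simp only [v]
          rw [← map_smul, smul_monomial, smul_eq_mul, mul_one]
        rw [this]
        exact Submodule.smul_mem _ _ (Submodule.subset_span ⟨_, rfl⟩)
    · rw [Submodule.span_le]
      rintro _ ⟨d, rfl⟩
      refine ⟨monomial d.1 1, ?_, rfl⟩
      exact isHomogeneous_monomial _ d.2.1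
  unfold hdim
  rw [hspan, finrank_span_eq_card hli, ← Nat.card_coe_set_eq, Nat.card_eq_fintype_card]

lemma match_up {K : Type*} [Field K] {n : ℕ} (I : Ideal (MvPolynomial (Fin n) K)) (k : ℕ)
    (h : HasFullMatching K I (k + 1)) (hle : (MSet K I k).ncard ≤ (MSet K I (k + 1)).ncard) :
    ∃ g : (Fin n →₀ ℕ) → (Fin n →₀ ℕ), (∀ d ∈ MSet K I k, g d ∈ MSet K I (k + 1) ∧ d ≤ g d) ∧
      Set.InjOn g (MSet K I k) := by
  classical
  obtain ⟨M, h1, h2, h3⟩ := h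
  simp only [Nat.add_sub_cancel] at h1 h3
  rw [min_eq_left hle] at h3
  have hinj : Set.InjOn Prod.fst (M : Set ((Fin n →₀ ℕ) × (Fin n →₀ ℕ))) := by
    intro a ha b hb hab
    by_contra hne
    exact (h2 a ha b hb hne).1 hab
  have hE : ((M.image Prod.fst : Finset _) : Set (Fin n →₀ ℕ)) = MSet K I k := by
    refine Set.eq_of_subset_of_ncard_le ?_ ?_ (MSet_finite K I k)
    · intro d hd
      simp only [Finset.coe_image, Set.mem_image] at hd
      obtain ⟨a, ha, rfl⟩ := hd
      exact (h1 a ha).1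
    · rw [Set.ncard_coe_finset, Finset.card_image_of_injOn hinj, h3]
  have hex : ∀ d, ∃ e, d ∈ MSet K I k → (d, e) ∈ M := by
    intro d
    by_cases hd : d ∈ MSet K I k
    · rw [← hE] at hd
      simp only [Finset.coe_image, Set.mem_image] at hd
      obtain ⟨⟨a, b⟩, ha, rfl⟩ := hd
      exact ⟨b, fun _ => ha⟩
    · exact ⟨0, fun h => absurd h hd⟩
  choose g hg using hex
  refine ⟨g, fun d hd => ⟨(h1 _ (hg d hd)).2.1, (h1 _ (hg d hd)).2.2⟩, ?_⟩
  intro a ha b hb hab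
  by_contra hne
  exact (h2 _ (hg a ha) _ (hg b hb) (fun h => hne (congrArg Prod.fst h))).2 hab

lemma match_down {K : Type*} [Field K] {n : ℕ} (I : Ideal (MvPolynomial (Fin n) K)) (k : ℕ)
    (h : HasFullMatching K I (k + 1)) (hle : (MSet K I (k + 1)).ncard ≤ (MSet K I k).ncard) :
    ∃ g : (Fin n →₀ ℕ) → (Fin n →₀ ℕ), (∀ d ∈ MSet K I (k + 1), g d ∈ MSet K I k ∧ g d ≤ d) ∧
      Set.InjOn g (MSet K I (k + 1)) := by
  classical
  obtain ⟨M, h1, h2, h3⟩ := h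
  simp only [Nat.add_sub_cancel] at h1 h3
  rw [min_eq_right hle] at h3
  have hinj : Set.InjOn Prod.snd (M : Set ((Fin n →₀ ℕ) × (Fin n →₀ ℕ))) := by
    intro a ha b hb hab
    by_contra hne
    exact (h2 a ha b hb hne).2 hab
  have hE : ((M.image Prod.snd : Finset _) : Set (Fin n →₀ ℕ)) = MSet K I (k + 1) := by
    refine Set.eq_of_subset_of_ncard_le ?_ ?_ (MSet_finite K I _)
    · intro d hd
      simp only [Finset.coe_image, Set.mem_image] at hd
      obtain ⟨a, ha, rfl⟩ := hd
      exact (h1 a ha).2.1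
    · rw [Set.ncard_coe_finset, Finset.card_image_of_injOn hinj, h3]
  have hex : ∀ d, ∃ e, d ∈ MSet K I (k + 1) → (e, d) ∈ M := by
    intro d
    by_cases hd : d ∈ MSet K I (k + 1)
    · rw [← hE] at hd
      simp only [Finset.coe_image, Set.mem_image] at hd
      obtain ⟨⟨a, b⟩, ha, rfl⟩ := hd
      exact ⟨a, fun _ => ha⟩
    · exact ⟨0, fun h => absurd h hd⟩
  choose g hg using hex
  refine ⟨g, fun d hd => ⟨(h1 _ (hg d hd)).1, (h1 _ (hg d hd)).2.2⟩, ?_⟩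
  intro a ha b hb hab
  by_contra hne
  exact (h2 _ (hg a ha) _ (hg b hb) (fun h => hne (congrArg Prod.snd h))).1 hab

/-- Abstract chain decomposition. -/
lemma chain_map {α : Type*} [PartialOrder α] (S : ℕ → Set α) (p : ℕ)
    (hup : ∀ k < p, ∃ g : α → α, (∀ d ∈ S k, g d ∈ S (k + 1) ∧ d ≤ g d) ∧ Set.InjOn g (S k))
    (hdn : ∀ k, p ≤ k → ∃ g : α → α, (∀ d ∈ S (k + 1), g d ∈ S k ∧ g d ≤ d) ∧
      Set.InjOn g (S (k + 1))) :
    ∃ φ : ℕ → α → α, (∀ k, ∀ d ∈ S k, φ k d ∈ S p) ∧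
      ∀ k l, ∀ d ∈ S k, ∀ e ∈ S l, φ k d = φ l e → d ≤ e ∨ e ≤ d := by
  classical
  -- upward maps from level p - j
  have U : ∀ j, j ≤ p → ∃ φ : ℕ → α → α,
      ∀ k, p - j ≤ k → k ≤ p → (∀ d ∈ S k, φ k d ∈ S p ∧ d ≤ φ k d) ∧ Set.InjOn (φ k) (S k) ∧
      ∀ l, k ≤ l → l ≤ p → ∀ d ∈ S k, ∀ e ∈ S l, φ k d = φ l e → d ≤ e := by
    intro j
    induction j with
    | zero =>
      intro _
      refine ⟨fun _ d => d, fun k h1 h2 => ?_⟩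
      obtain rfl : k = p := by omega
      refine ⟨fun d hd => ⟨hd, le_rfl⟩, fun a _ b _ h => h, ?_⟩
      intro l _ _ d _ e _ h
      exact h.le
    | succ j ih =>
      intro hj
      obtain ⟨φ, hφ⟩ := ih (by omega)
      obtain ⟨g, hg, hgi⟩ := hup (p - (j + 1)) (by omega)
      have e1 : p - (j + 1) + 1 = p - j := by omega
      rw [e1] at hg
      refine ⟨fun k => if k = p - (j + 1) then φ (p - j) ∘ g else φ k, fun k h1 h2 => ?_⟩
      by_cases hk : k = p - (j + 1)
      · have A := hφ (p - j) le_rfl (by omega)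
        subst hk
        simp only [if_true]
        refine ⟨fun d hd => ?_, ?_, ?_⟩
        · exact ⟨(A.1 _ (hg d hd).1).1, (hg d hd).2.trans (A.1 _ (hg d hd).1).2⟩
        · exact A.2.1.comp hgi (fun d hd => (hg d hd).1)
        · intro l hl hlp d hd e he h
          by_cases hl' : l = p - (j + 1)
          · subst hl'
            simp only [if_true] at h
            exact (A.2.1.comp hgi (fun d hd => (hg d hd).1) hd he h).le
          · rw [if_neg hl'] at h
            exact (hg d hd).2.trans (A.2.2 l (by omega) hlp _ (hg d hd).1 e he h)
      · have A := hφ k (by omega) h2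
        simp only [if_neg hk]
        refine ⟨A.1, A.2.1, ?_⟩
        intro l hl hlp d hd e he h
        rw [if_neg (by omega)] at h
        exact A.2.2 l hl hlp d hd e he h
  obtain ⟨φ, hφ⟩ := U p le_rfl
  have D : ∃ ψ : ℕ → α → α, ∀ j, (∀ d ∈ S (p + j), ψ j d ∈ S p ∧ ψ j d ≤ d) ∧
      Set.InjOn (ψ j) (S (p + j)) ∧
      ∀ i, i ≤ j → ∀ d ∈ S (p + i), ∀ e ∈ S (p + j), ψ i d = ψ j e → d ≤ e := by
    choose g hg hgi using fun j => hdn (p + j) (by omega)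
    let ψ : ℕ → α → α := fun j => Nat.rec id (fun j f => f ∘ g j) j
    have hs : ∀ j, ψ (j + 1) = ψ j ∘ g j := fun _ => rfl
    refine ⟨ψ, fun j => ?_⟩
    induction j with
    | zero =>
      refine ⟨fun d hd => ⟨hd, le_rfl⟩, fun a _ b _ h => h, ?_⟩
      intro i hi d _ e _ h
      obtain rfl : i = 0 := by omega
      exact (show d = e from h).le
    | succ j ih =>
      have hinj : Set.InjOn (ψ (j + 1)) (S (p + (j + 1))) := by
        rw [hs]
        exact ih.2.1.comp (hgi j) (fun d hd => (hg j d hd).1)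
      refine ⟨fun d hd => ?_, hinj, ?_⟩
      · rw [hs]
        exact ⟨(ih.1 _ (hg j d hd).1).1, (ih.1 _ (hg j d hd).1).2.trans (hg j d hd).2⟩
      · intro i hi d hd e he h
        by_cases hij : i = j + 1
        · subst hij
          exact (hinj hd he h).le
        · exact (ih.2.2 i (by omega) d hd _ (hg j e he).1 h).trans (hg j e he).2
  obtain ⟨ψ, hψ⟩ := D
  have hψ' : ∀ l, p ≤ l → (∀ d ∈ S l, ψ (l - p) d ∈ S p ∧ ψ (l - p) d ≤ d) := by
    intro l hl
    have := (hψ (l - p)).1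
    rwa [Nat.add_sub_cancel' hl] at this
  have hψ2 : ∀ k l, p ≤ k → k ≤ l → ∀ d ∈ S k, ∀ e ∈ S l, ψ (k - p) d = ψ (l - p) e → d ≤ e := by
    intro k l hk hl
    have := (hψ (l - p)).2.2 (k - p) (by omega)
    rwa [Nat.add_sub_cancel' hk, Nat.add_sub_cancel' (hk.trans hl)] at this
  refine ⟨fun k => if k ≤ p then φ k else ψ (k - p), fun k d hd => ?_, ?_⟩
  · by_cases hk : k ≤ p
    · simp only [if_pos hk]; exact ((hφ k (by omega) hk).1 d hd).1
    · simp only [if_neg hk]; exact (hψ' k (by omega) d hd).1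
  · have key : ∀ k l, k ≤ l → ∀ d ∈ S k, ∀ e ∈ S l,
        (if k ≤ p then φ k else ψ (k - p)) d = (if l ≤ p then φ l else ψ (l - p)) e → d ≤ e := by
      intro k l hkl d hd e he h
      by_cases hk : k ≤ p
      · rw [if_pos hk] at h
        by_cases hl : l ≤ p
        · rw [if_pos hl] at h
          exact (hφ k (by omega) hk).2.2 l hkl hl d hd e he h
        · rw [if_neg hl] at h
          exact ((hφ k (by omega) hk).1 d hd).2.trans (h.le.trans (hψ' l (by omega) e he).2)
      · rw [if_neg hk, if_neg (by omega)] at h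
        exact hψ2 k l (by omega) hkl d hd e he h
    intro k l d hd e he h
    rcases le_total k l with hkl | hkl
    · exact Or.inl (key k l hkl d hd e he h)
    · exact Or.inr (key l k hkl e he d hd h.symm)

lemma mu_le_of_antichain {K : Type*} [Field K] {n : ℕ} (I : Ideal (MvPolynomial (Fin n) K))
    (w : ℕ) (hw : ∀ F : Set (Fin n →₀ ℕ), (∀ d ∈ F, monomial d (1 : K) ∉ I) →
      IsAntichain (· ≤ ·) F → F.Finite ∧ F.ncard ≤ w)
    (J : Ideal (MvPolynomial (Fin n) K ⧸ I)) : mu J ≤ w := by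
  classical
  set q := Ideal.Quotient.mk I with hq
  let m : MonomialOrder (Fin n) := MonomialOrder.lex
  let L : (Fin n →₀ ℕ) → Prop := fun d => monomial d (1 : K) ∉ I ∧
    ∃ f, q f ∈ J ∧ f ≠ 0 ∧ m.degree f = d
  let F : Set (Fin n →₀ ℕ) := {d | Minimal L d}
  have hFa : IsAntichain (· ≤ ·) F := by
    intro a ha b hb hab hle
    exact hab (le_antisymm hle (hb.2 ha.1 hle))
  obtain ⟨hfin, hcard⟩ := hw F (fun d hd => hd.1.1) hFa
  have hex : ∀ d, ∃ f, d ∈ F → (q f ∈ J ∧ f ≠ 0 ∧ m.degree f = d) := by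
    intro d
    by_cases hd : d ∈ F
    · obtain ⟨f, hf⟩ := hd.1.2
      exact ⟨f, fun _ => hf⟩
    · exact ⟨0, fun h => absurd h hd⟩
  choose G hG using hex
  let s : Finset (MvPolynomial (Fin n) K ⧸ I) := hfin.toFinset.image (fun d => q (G d))
  have hs : s.card ≤ w := by
    refine Finset.card_image_le.trans ?_
    rwa [← Set.ncard_eq_toFinset_card F hfin]
  refine le_trans (Nat.sInf_le ⟨s, rfl, ?_⟩) hs
  have hsJ : Ideal.span (s : Set (MvPolynomial (Fin n) K ⧸ I)) ≤ J := by
    rw [Ideal.span_le]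
    intro x hx
    simp only [s, Finset.coe_image, Set.mem_image, Set.Finite.coe_toFinset] at hx
    obtain ⟨d, hd, rfl⟩ := hx
    exact (hG d hd).1
  apply le_antisymm hsJ
  have main : ∀ (a : m.syn) (f : MvPolynomial (Fin n) K), m.toSyn (m.degree f) = a → q f ∈ J →
      q f ∈ Ideal.span (s : Set (MvPolynomial (Fin n) K ⧸ I)) := by
    intro a
    induction a using WellFoundedLT.induction with
    | ind a ih =>
    intro f hfa hfJ
    by_cases hf0 : f = 0
    · subst hf0; rw [map_zero]; exact zero_mem _
    have red : ∀ t, q t ∈ Ideal.span (s : Set (MvPolynomial (Fin n) K ⧸ I)) →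
        m.toSyn (m.degree t) ≤ m.toSyn (m.degree f) →
        coeff (m.degree f) t = coeff (m.degree f) f →
        q f ∈ Ideal.span (s : Set (MvPolynomial (Fin n) K ⧸ I)) := by
      intro t ht htd htc
      have hft : q f = q (f - t) + q t := by rw [map_sub, sub_add_cancel]
      rw [hft]
      refine add_mem ?_ ht
      by_cases h0 : f - t = 0
      · rw [h0, map_zero]; exact zero_mem _
      refine ih (m.toSyn (m.degree (f - t))) ?_ _ rfl ?_
      · rw [← hfa]
        refine lt_of_le_of_ne ?_ ?_
        · exact m.degree_sub_le.trans (sup_le le_rfl htd)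
        · intro heq
          have heq' := m.toSyn.injective heq
          have := (m.coeff_degree_ne_zero_iff (f := f - t)).2 h0
          rw [heq', coeff_sub, htc, sub_self] at this
          exact this rfl
      · rw [map_sub]; exact J.sub_mem hfJ (hsJ ht)
    by_cases hI : monomial (m.degree f) (1 : K) ∈ I
    · refine red (monomial (m.degree f) (coeff (m.degree f) f)) ?_ (m.degree_monomial_le _) ?_
      · have : monomial (m.degree f) (coeff (m.degree f) f) ∈ I := by
          rw [← mul_one (coeff (m.degree f) f), ← smul_eq_mul, ← smul_monomial, smul_eq_C_mul]
          exact I.mul_mem_left _ hI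
        rw [Ideal.Quotient.eq_zero_iff_mem.2 this]; exact zero_mem _
      · simp
    · obtain ⟨d, hdle, hd⟩ := exists_minimal_le_of_wellFoundedLT L (m.degree f)
        ⟨hI, f, hfJ, hf0, rfl⟩
      obtain ⟨h1, h2, h3⟩ := hG d hd
      have hlc : coeff d (G d) ≠ 0 := by
        have := (m.coeff_degree_ne_zero_iff (f := G d)).2 h2
        rwa [h3] at this
      refine red (monomial (m.degree f - d) (coeff (m.degree f) f / coeff d (G d)) * G d) ?_ ?_ ?_
      · rw [map_mul]
        refine Ideal.mul_mem_left _ _ (Ideal.subset_span ?_)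
        simp only [s, Finset.coe_image, Set.mem_image, Set.Finite.coe_toFinset]
        exact ⟨d, hd, rfl⟩
      · refine m.degree_mul_le.trans ?_
        rw [map_add, h3]
        calc _ ≤ m.toSyn (m.degree f - d) + m.toSyn d := by
                gcongr; exact m.degree_monomial_le _
          _ = m.toSyn (m.degree f) := by rw [← map_add, tsub_add_cancel_of_le hdle]
      · have hcm := coeff_monomial_mul d (m.degree f - d)
          (coeff (m.degree f) f / coeff d (G d)) (G d)
        rw [tsub_add_cancel_of_le hdle] at hcm
        rw [hcm, div_mul_cancel₀ _ hlc]
  intro x hx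
  obtain ⟨f, rfl⟩ := Ideal.Quotient.mk_surjective x
  exact main _ f rfl hx

lemma exists_mu_ge {K : Type*} [Field K] {n : ℕ} (I : Ideal (MvPolynomial (Fin n) K))
    (hmon : IsMonomialIdeal I) (p : ℕ) :
    ∃ J : Ideal (MvPolynomial (Fin n) K ⧸ I), (MSet K I p).ncard ≤ mu J := by
  classical
  haveI : Fintype (MSet K I p) := (MSet_finite K I p).fintype
  set q := Ideal.Quotient.mk I with hq
  let J : Ideal (MvPolynomial (Fin n) K ⧸ I) :=
    Ideal.span (Set.range fun d : MSet K I p => q (monomial d.1 1))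
  refine ⟨J, ?_⟩
  -- elements of J have vanishing coefficients in low degree
  have hlow : ∀ f, q f ∈ J → ∀ e, monomial e (1 : K) ∉ I → mdeg e < p → coeff e f = 0 := by
    intro f hf e heI hep
    have hJ : J = (Ideal.span (Set.range fun d : MSet K I p => monomial d.1 (1 : K))).map q := by
      rw [Ideal.map_span, ← Set.range_comp]; rfl
    rw [hJ, Ideal.mem_map_iff_of_surjective q Ideal.Quotient.mk_surjective] at hf
    obtain ⟨g, hg, hgf⟩ := hf
    have h1 : g - f ∈ I := Ideal.Quotient.eq.1 hgf
    have h2 : coeff e (g - f) = 0 := by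
      by_contra h
      exact heI (hmon _ h1 e (mem_support_iff.2 h))
    have h3 : coeff e g = 0 := by
      clear hgf h1 h2
      induction hg using Submodule.span_induction with
      | mem x hx =>
        obtain ⟨d, rfl⟩ := hx
        rw [coeff_monomial, if_neg]
        rintro rfl
        exact absurd d.2.1 hep.ne
      | zero => simp
      | add x y _ _ hx hy => rw [coeff_add, hx, hy, add_zero]
      | smul a x hx0 _ =>
        have hx0' : x ∈ Ideal.span ((fun d => monomial d (1 : K)) '' (MSet K I p)) := by
          rw [Set.image_eq_range]; exact hx0
        have : a • x ∈ Ideal.span ((fun d => monomial d (1 : K)) '' (MSet K I p)) :=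
          Ideal.mul_mem_left _ _ hx0'
        by_contra h
        obtain ⟨d, hd, hde⟩ := (mem_ideal_span_monomial_image.1 this) e (mem_support_iff.2 h)
        have := Finsupp.degree_mono hde
        rw [← mdeg_eq, ← mdeg_eq, hd.1] at this
        omega
    rw [coeff_sub, h3, zero_sub, neg_eq_zero] at h2
    exact h2
  -- the coefficient map
  let π : MvPolynomial (Fin n) K →ₗ[K] (MSet K I p → K) :=
    LinearMap.pi fun d => lcoeff K d.1
  have hπ : ∀ f d, π f d = coeff d.1 f := fun _ _ => rfl
  have hπI : ∀ f ∈ I, π f = 0 := by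
    intro f hf
    ext d
    rw [hπ]
    by_contra h
    exact d.2.2 (hmon _ hf d.1 (mem_support_iff.2 h))
  have hπmul : ∀ a f, q f ∈ J → π (a * f) = coeff 0 a • π f := by
    intro a f hf
    ext d
    rw [Pi.smul_apply, hπ, hπ, coeff_mul, Finset.sum_eq_single (0, d.1)]
    · rfl
    · rintro ⟨u, v⟩ huv hne
      rw [Finset.HasAntidiagonal.mem_antidiagonal] at huv
      simp only at huv ⊢
      have hu : u ≠ 0 := by
        rintro rfl
        apply hne
        rw [← huv, zero_add]
      rw [hlow f hf v, mul_zero]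
      · intro hv
        apply d.2.2
        rw [← huv, ← mul_one (1 : K), ← monomial_mul]
        exact I.mul_mem_left _ hv
      · have h1 := d.2.1
        rw [← huv, mdeg_eq, map_add] at h1
        rw [mdeg_eq]
        have : u.degree ≠ 0 := by rwa [Ne, Finsupp.degree_eq_zero_iff]
        omega
    · intro h
      exact absurd (Finset.HasAntidiagonal.mem_antidiagonal.2 (zero_add _)) h
  refine le_csInf ?_ ?_
  · refine ⟨_, Finset.univ.image (fun d : MSet K I p => q (monomial d.1 1)), rfl, ?_⟩
    rw [Finset.coe_image, Finset.coe_univ, Set.image_univ]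
  rintro k ⟨s, rfl, hs⟩
  obtain ⟨r, hr⟩ := (Ideal.Quotient.mk_surjective (I := I)).hasRightInverse
  have hr' : ∀ x, q (r x) = x := hr
  let T : Finset (MSet K I p → K) := s.image fun x => π (r x)
  have hmem : ∀ x ∈ J, π (r x) ∈ Submodule.span K (T : Set (MSet K I p → K)) := by
    have hwd : ∀ f g, q f = q g → π f = π g := by
      intro f g h
      rw [← sub_eq_zero, ← map_sub]
      exact hπI _ (Ideal.Quotient.eq.1 h)
    intro x hx
    rw [← hs] at hx
    induction hx using Submodule.span_induction with
    | mem x hx =>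
      refine Submodule.subset_span ?_
      simp only [T, Finset.coe_image]
      exact ⟨x, hx, rfl⟩
    | zero =>
      rw [hwd (r 0) 0 (by rw [hr', map_zero]), map_zero]; exact zero_mem _
    | add x y _ _ hx hy =>
      rw [hwd (r (x + y)) (r x + r y) (by rw [hr', map_add, hr', hr']), map_add]
      exact add_mem hx hy
    | smul a x hx0 hx =>
      have hxJ : x ∈ J := by rw [← hs]; exact hx0
      rw [hwd (r (a • x)) (r a * r x) (by rw [hr', map_mul, hr', hr', smul_eq_mul]),
        hπmul _ _ (by rw [hr']; exact hxJ)]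
      exact Submodule.smul_mem _ _ hx
  have htop : Submodule.span K (T : Set (MSet K I p → K)) = ⊤ := by
    rw [eq_top_iff, ← (Pi.basisFun K (MSet K I p)).span_eq, Submodule.span_le]
    rintro _ ⟨d, rfl⟩
    have h1 := hmem (q (monomial d.1 1)) (Ideal.subset_span ⟨d, rfl⟩)
    have h2 : π (r (q (monomial d.1 1))) = Pi.basisFun K (MSet K I p) d := by
      have : π (r (q (monomial d.1 1))) = π (monomial d.1 1) := by
        rw [← sub_eq_zero, ← map_sub]
        exact hπI _ (Ideal.Quotient.eq.1 (hr' _))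
      rw [this]
      ext e
      rw [hπ, coeff_monomial, Pi.basisFun_apply, Pi.single_apply]
      simp only [Subtype.ext_iff, eq_comm]
    rw [h2] at h1
    exact h1
  have hc : Module.finrank K (Submodule.span K (T : Set (MSet K I p → K))) ≤ T.card :=
    finrank_span_finset_le_card T
  rw [htop, finrank_top, Module.finrank_fintype_fun_eq_card, ← Nat.card_eq_fintype_card,
    Nat.card_coe_set_eq] at hc
  exact hc.trans Finset.card_image_le

/-- If a monomial Artinian algebra `A = S/I` has a unimodal Hilbert function and
has a full matching at every degree, then `A` has the Sperner property. -/
theorem stmt10 {K : Type*} [Field K] {n : ℕ} (I : Ideal (MvPolynomial (Fin n) K))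
    (hmon : IsMonomialIdeal I) [FiniteDimensional K (MvPolynomial (Fin n) K ⧸ I)]
    (hunimodal : ∃ p : ℕ, (∀ k : ℕ, k < p → hdim K n I k ≤ hdim K n I (k + 1)) ∧
      (∀ k : ℕ, p ≤ k → hdim K n I (k + 1) ≤ hdim K n I k))
    (hmatch : ∀ k : ℕ, 1 ≤ k → HasFullMatching K I k) :
    SpernerAlg I := by
  classical
  obtain ⟨p, hp1, hp2⟩ := hunimodal
  simp only [hdim_eq I hmon] at hp1 hp2
  obtain ⟨φ, hφ1, hφ2⟩ := chain_map (MSet K I) p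
    (fun k hk => match_up I k (hmatch _ (by omega)) (hp1 k hk))
    (fun k hk => match_down I k (hmatch _ (by omega)) (hp2 k hk))
  have hw : ∀ F : Set (Fin n →₀ ℕ), (∀ d ∈ F, monomial d (1 : K) ∉ I) →
      IsAntichain (· ≤ ·) F → F.Finite ∧ F.ncard ≤ (MSet K I p).ncard := by
    intro F hF hFa
    have hmaps : ∀ d ∈ F, φ (mdeg d) d ∈ MSet K I p := fun d hd => hφ1 _ d ⟨rfl, hF d hd⟩
    have hinj : Set.InjOn (fun d => φ (mdeg d) d) F := by
      intro a ha b hb hab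
      rcases hφ2 _ _ a ⟨rfl, hF a ha⟩ b ⟨rfl, hF b hb⟩ hab with h | h
      · exact hFa.eq ha hb h
      · exact (hFa.eq hb ha h).symm
    exact ⟨Set.Finite.of_injOn hmaps hinj (MSet_finite K I p),
      Set.ncard_le_ncard_of_injOn _ hmaps hinj (MSet_finite K I p)⟩
  have hub := mu_le_of_antichain I _ hw
  obtain ⟨J, hJ⟩ := exists_mu_ge I hmon p
  have h1 : IsGreatest {m | ∃ J : Ideal (MvPolynomial (Fin n) K ⧸ I), mu J = m}
      (MSet K I p).ncard := by
    refine ⟨⟨J, le_antisymm (hub J) hJ⟩, ?_⟩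
    rintro _ ⟨J, rfl⟩
    exact hub J
  have h2 : IsGreatest (Set.range (hdim K n I)) (MSet K I p).ncard := by
    refine ⟨⟨p, hdim_eq I hmon p⟩, ?_⟩
    rintro _ ⟨k, rfl⟩
    rw [hdim_eq I hmon]
    rcases le_total k p with hk | hk
    · exact Nat.decreasingInduction' (P := fun k => (MSet K I k).ncard ≤ (MSet K I p).ncard)
        (fun j hj _ ih => (hp1 j hj).trans ih) hk le_rfl
    · exact Nat.le_induction (P := fun k _ => (MSet K I k).ncard ≤ (MSet K I p).ncard)
        le_rfl (fun j hj ih => (hp2 j hj).trans ih) k hk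
  unfold SpernerAlg
  rw [h1.csSup_eq, h2.csSup_eq]
end

section
/- Let K be a field, k and α odd integers with k ≥ 2α + 3 and α ≥ 3, S = K[x₁,x₂,x₃], m = (x₁,x₂,x₃), and I = (x₁^k, x₂^k, x₃^k, x₁^α x₂^α x₃^α). Then the ideal I + m^{k+α−1} has the Rees property but is not m-full. -/
open MvPolynomial

def InI (k α : ℕ) (u : Fin 3 →₀ ℕ) : Prop :=
  k ≤ u 0 ∨ k ≤ u 1 ∨ k ≤ u 2 ∨ (α ≤ u 0 ∧ α ≤ u 1 ∧ α ≤ u 2)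

def EE (k α : ℕ) (u : Fin 3 →₀ ℕ) : Prop :=
  InI k α u ∨ k + α - 1 ≤ u 0 + u 1 + u 2

theorem fs_ext {u v : Fin 3 →₀ ℕ} (h0 : u 0 = v 0) (h1 : u 1 = v 1) (h2 : u 2 = v 2) : u = v := by
  ext i; fin_cases i <;> simpa

theorem fs_le {u v : Fin 3 →₀ ℕ} : u ≤ v ↔ u 0 ≤ v 0 ∧ u 1 ≤ v 1 ∧ u 2 ≤ v 2 := by
  constructor
  · intro h; exact ⟨h 0, h 1, h 2⟩
  · rintro ⟨h0, h1, h2⟩ i; fin_cases i <;> simpa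

theorem EE_up {k α : ℕ} {u v : Fin 3 →₀ ℕ} (h : u ≤ v) (hu : EE k α u) : EE k α v := by
  rw [fs_le] at h
  unfold EE InI at *
  omega

theorem exists_pred {u : Fin 3 →₀ ℕ} (h : 1 ≤ u 0 + u 1 + u 2) :
    ∃ (i : Fin 3) (v : Fin 3 →₀ ℕ), u = Finsupp.single i 1 + v := by
  have : ∃ i, 1 ≤ u i := by
    by_contra hc
    push Not at hc
    have := hc 0; have := hc 1; have := hc 2
    omega
  obtain ⟨i, hi⟩ := this
  refine ⟨i, u - Finsupp.single i 1, ?_⟩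
  rw [add_comm, tsub_add_cancel_of_le]
  simpa using hi

/-- direction of the chain -/
def dir (k α : ℕ) (u : Fin 3 →₀ ℕ) : Fin 3 :=
  if u 0 < α ∧ α ≤ u 1 then 2
  else if u 1 < α ∧ α ≤ u 2 then 0
  else if u 2 < α ∧ α ≤ u 0 ∧ α ≤ u 1 then 1
  else if u 1 < α ∧ u 2 < α ∧ k - 1 ≤ u 0 + u 1 then 1
  else 0

noncomputable def phi (k α : ℕ) (u : Fin 3 →₀ ℕ) : Fin 3 →₀ ℕ :=
  u + Finsupp.single (dir k α u) 1

theorem phi_cases (k α : ℕ) (u : Fin 3 →₀ ℕ) :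
    (dir k α u = 0 ∧ phi k α u 0 = u 0 + 1 ∧ phi k α u 1 = u 1 ∧ phi k α u 2 = u 2) ∨
    (dir k α u = 1 ∧ phi k α u 0 = u 0 ∧ phi k α u 1 = u 1 + 1 ∧ phi k α u 2 = u 2) ∨
    (dir k α u = 2 ∧ phi k α u 0 = u 0 ∧ phi k α u 1 = u 1 ∧ phi k α u 2 = u 2 + 1) := by
  unfold phi
  generalize dir k α u = i
  fin_cases i <;> simp [Finsupp.single_apply]

theorem dir_cases (k α : ℕ) (u : Fin 3 →₀ ℕ) :
    (u 0 < α ∧ α ≤ u 1 ∧ dir k α u = 2) ∨ (u 1 < α ∧ α ≤ u 2 ∧ dir k α u = 0) ∨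
    (u 2 < α ∧ α ≤ u 0 ∧ α ≤ u 1 ∧ dir k α u = 1) ∨
    (u 1 < α ∧ u 2 < α ∧ k - 1 ≤ u 0 + u 1 ∧ dir k α u = 1) ∨
    (u 1 < α ∧ u 2 < α ∧ u 0 + u 1 < k - 1 ∧ dir k α u = 0) ∨
    (α ≤ u 0 ∧ α ≤ u 1 ∧ α ≤ u 2 ∧ dir k α u = 0) := by
  unfold dir
  split_ifs <;> simp <;> omega

theorem phi_desc (k α : ℕ) (u : Fin 3 →₀ ℕ) :
    (u 0 < α ∧ α ≤ u 1 ∧ phi k α u 0 = u 0 ∧ phi k α u 1 = u 1 ∧ phi k α u 2 = u 2 + 1) ∨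
    (u 1 < α ∧ α ≤ u 2 ∧ phi k α u 0 = u 0 + 1 ∧ phi k α u 1 = u 1 ∧ phi k α u 2 = u 2) ∨
    (u 2 < α ∧ α ≤ u 0 ∧ α ≤ u 1 ∧
      phi k α u 0 = u 0 ∧ phi k α u 1 = u 1 + 1 ∧ phi k α u 2 = u 2) ∨
    (u 1 < α ∧ u 2 < α ∧ k - 1 ≤ u 0 + u 1 ∧
      phi k α u 0 = u 0 ∧ phi k α u 1 = u 1 + 1 ∧ phi k α u 2 = u 2) ∨
    (u 1 < α ∧ u 2 < α ∧ u 0 + u 1 < k - 1 ∧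
      phi k α u 0 = u 0 + 1 ∧ phi k α u 1 = u 1 ∧ phi k α u 2 = u 2) ∨
    (α ≤ u 0 ∧ α ≤ u 1 ∧ α ≤ u 2 ∧
      phi k α u 0 = u 0 + 1 ∧ phi k α u 1 = u 1 ∧ phi k α u 2 = u 2) := by
  have h := dir_cases k α u
  have h' := phi_cases k α u
  rcases h with h | h | h | h | h | h <;> obtain ⟨h0, h⟩ := h <;>
    rcases h' with ⟨h1, h2⟩ | ⟨h1, h2⟩ | ⟨h1, h2⟩ <;> simp [h1] at h <;> omega

theorem phi_inj (k α : ℕ) (hk : 2 * α + 3 ≤ k) : Function.Injective (phi k α) := by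
  intro u v h
  have h0 : phi k α u 0 = phi k α v 0 := by rw [h]
  have h1 : phi k α u 1 = phi k α v 1 := by rw [h]
  have h2 : phi k α u 2 = phi k α v 2 := by rw [h]
  have hu := phi_desc k α u
  have hv := phi_desc k α v
  clear h
  have : u 0 = v 0 ∧ u 1 = v 1 ∧ u 2 = v 2 := by
    rcases hu with hu | hu | hu | hu | hu | hu <;>
    rcases hv with hv | hv | hv | hv | hv | hv <;> omega
  exact fs_ext this.1 this.2.1 this.2.2

theorem phi_deg (k α : ℕ) (u : Fin 3 →₀ ℕ) :
    phi k α u 0 + phi k α u 1 + phi k α u 2 = u 0 + u 1 + u 2 + 1 := by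
  have hu := phi_desc k α u
  omega

theorem phi_notI (k α : ℕ) (hk : 2 * α + 3 ≤ k) (u : Fin 3 →₀ ℕ) (hu : ¬ InI k α u)
    (hd : u 0 + u 1 + u 2 < k + α - 1) : ¬ InI k α (phi k α u) := by
  have h := phi_desc k α u
  unfold InI at *
  omega

theorem phi_iter_deg (k α n : ℕ) (u : Fin 3 →₀ ℕ) :
    ((phi k α)^[n] u) 0 + ((phi k α)^[n] u) 1 + ((phi k α)^[n] u) 2 = u 0 + u 1 + u 2 + n := by
  induction n with
  | zero => simp
  | succ n ih => rw [Function.iterate_succ_apply', phi_deg, ih]; ring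

theorem phi_iter_le (k α n : ℕ) (u : Fin 3 →₀ ℕ) : u ≤ (phi k α)^[n] u := by
  induction n with
  | zero => simp
  | succ n ih =>
    rw [Function.iterate_succ_apply']
    exact ih.trans (by unfold phi; exact le_self_add)

theorem phi_iter_notI (k α n : ℕ) (hk : 2 * α + 3 ≤ k) (u : Fin 3 →₀ ℕ) (hu : ¬ InI k α u)
    (hd : u 0 + u 1 + u 2 + n ≤ k + α - 1) : ¬ InI k α ((phi k α)^[n] u) := by
  induction n with
  | zero => simpa
  | succ n ih =>
    rw [Function.iterate_succ_apply']
    apply phi_notI k α hk _ (ih (by omega))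
    rw [phi_iter_deg]; omega

theorem min_deg {k α : ℕ} (M : Set (Fin 3 →₀ ℕ)) (hE : ∀ u, EE k α u → u ∈ M)
    {u : Fin 3 →₀ ℕ} (hu : Minimal (· ∈ M) u) : u 0 + u 1 + u 2 ≤ k + α - 1 := by
  by_contra hc
  obtain ⟨i, v, rfl⟩ := exists_pred (u := u) (by omega)
  have hv : EE k α v := by
    right
    have : (Finsupp.single i 1 + v : Fin 3 →₀ ℕ) 0 + (Finsupp.single i 1 + v : Fin 3 →₀ ℕ) 1
      + (Finsupp.single i 1 + v : Fin 3 →₀ ℕ) 2 = 1 + (v 0 + v 1 + v 2) := by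
      fin_cases i <;> simp [Finsupp.single_apply] <;> ring
    omega
  have := hu.2 (hE v hv) (by exact le_add_self) i
  simp at this

theorem minE_finite (k α : ℕ) : {u | Minimal (· ∈ {u | EE k α u}) u}.Finite := by
  let B : Fin 3 →₀ ℕ := Finsupp.equivFunOnFinite.symm (fun _ => k + α - 1)
  apply (Set.finite_Iic B).subset
  intro u hu
  have := min_deg (k := k) (α := α) {u | EE k α u} (fun _ h => h) hu
  rw [Set.mem_Iic, fs_le]
  simp [B]
  omega

open Classical in
noncomputable def psi (k α : ℕ) (u : Fin 3 →₀ ℕ) : Fin 3 →₀ ℕ :=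
  if InI k α u then u else (phi k α)^[k + α - 1 - (u 0 + u 1 + u 2)] u

theorem psi_maps {k α : ℕ} (hk : 2 * α + 3 ≤ k) (M : Set (Fin 3 →₀ ℕ))
    (hE : ∀ u, EE k α u → u ∈ M) :
    Set.MapsTo (psi k α) {u | Minimal (· ∈ M) u} {u | Minimal (· ∈ {u | EE k α u}) u} := by
  intro u hu
  have hd := min_deg M hE hu
  unfold psi
  split_ifs with h
  · exact ⟨Or.inl h, fun v hv hvu => hu.2 (hE v hv) hvu⟩
  · have hdeg := phi_iter_deg k α (k + α - 1 - (u 0 + u 1 + u 2)) u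
    have hnI := phi_iter_notI k α (k + α - 1 - (u 0 + u 1 + u 2)) hk u h (by omega)
    refine ⟨Or.inr (by omega), fun v hv hvu => ?_⟩
    rw [fs_le] at hvu ⊢
    simp only [Set.mem_ofPred_eq] at hv
    unfold EE InI at hv
    unfold InI at hnI
    omega

theorem psi_inj_aux {k α : ℕ} (hk : 2 * α + 3 ≤ k) {M : Set (Fin 3 →₀ ℕ)}
    (hE : ∀ u, EE k α u → u ∈ M) {u v : Fin 3 →₀ ℕ} (hu : Minimal (· ∈ M) u)
    (hv : Minimal (· ∈ M) v) (huv : u 0 + u 1 + u 2 ≤ v 0 + v 1 + v 2)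
    (h : (phi k α)^[k + α - 1 - (u 0 + u 1 + u 2)] u
      = (phi k α)^[k + α - 1 - (v 0 + v 1 + v 2)] v) : u = v := by
  have hd := min_deg M hE hu
  have hd' := min_deg M hE hv
  have e : k + α - 1 - (u 0 + u 1 + u 2) = (k + α - 1 - (v 0 + v 1 + v 2)) +
    ((v 0 + v 1 + v 2) - (u 0 + u 1 + u 2)) := by omega
  rw [e, Function.iterate_add_apply] at h
  have h2 := (phi_inj k α hk).iterate _ h
  have h3 : u ≤ v := by rw [← h2]; exact phi_iter_le _ _ _ _
  exact le_antisymm h3 (hv.2 hu.1 h3)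

theorem psi_inj {k α : ℕ} (hk : 2 * α + 3 ≤ k) (M : Set (Fin 3 →₀ ℕ))
    (hE : ∀ u, EE k α u → u ∈ M) :
    Set.InjOn (psi k α) {u | Minimal (· ∈ M) u} := by
  intro u hu v hv h
  have hd := min_deg M hE hu
  have hd' := min_deg M hE hv
  unfold psi at h
  have key := fun (w : Fin 3 →₀ ℕ) (hw : ¬ InI k α w) (hwd : w 0 + w 1 + w 2 ≤ k + α - 1) =>
    phi_iter_notI k α (k + α - 1 - (w 0 + w 1 + w 2)) hk w hw (by omega)
  split_ifs at h with h1 h2 h2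
  · exact h
  · exact absurd (h ▸ h1) (key v h2 hd')
  · exact absurd (h ▸ h2) (key u h1 hd)
  · rcases le_total (u 0 + u 1 + u 2) (v 0 + v 1 + v 2) with hh | hh
    · exact psi_inj_aux hk hE hu hv hh h
    · exact (psi_inj_aux hk hE hv hu hh h.symm).symm

theorem mem_L {K : Type*} [Field K] {k α : ℕ} (hk : 2 * α + 3 ≤ k) (f : MvPolynomial (Fin 3) K) :
    f ∈ Ideal.span {X 0 ^ k, X 1 ^ k, X 2 ^ k, X 0 ^ α * X 1 ^ α * X 2 ^ α}
          + mm K 3 ^ (k + α - 1) ↔ ∀ u ∈ f.support, EE k α u := by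
  have hdeg : ∀ u : Fin 3 →₀ ℕ, Finsupp.degree u = u 0 + u 1 + u 2 := by
    intro u
    rw [Finsupp.degree_eq_sum]
    simp [Fin.sum_univ_three]
  have e1 : ({X 0 ^ k, X 1 ^ k, X 2 ^ k, X 0 ^ α * X 1 ^ α * X 2 ^ α} :
      Set (MvPolynomial (Fin 3) K)) = (fun s => monomial s (1 : K)) ''
      {Finsupp.single 0 k, Finsupp.single 1 k, Finsupp.single 2 k,
        Finsupp.single 0 α + Finsupp.single 1 α + Finsupp.single 2 α} := by
    simp [Set.image_insert_eq, X_pow_eq_monomial, monomial_mul]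
  have e2 : mm K 3 ^ (k + α - 1) = Ideal.span ((monomial · 1) '' (Finsupp.degree ⁻¹' {k + α - 1})) :=
    pow_idealOfVars_eq_span _
  rw [e1, e2, Submodule.add_eq_sup, ← Ideal.span_union, ← Set.image_union,
    mem_ideal_span_monomial_image]
  apply forall₂_congr
  intro u _
  constructor
  · rintro ⟨s, hs, hsu⟩
    have hs' : EE k α s := by
      simp only [Set.mem_union, Set.mem_insert_iff, Set.mem_singleton_iff, Set.mem_preimage] at hs
      rcases hs with (rfl | rfl | rfl | rfl) | hs
      · left; simp [InI]
      · left; simp [InI]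
      · left; simp [InI]
      · left; simp [InI, Finsupp.single_apply]
      · right; rw [← hdeg, hs]
    exact EE_up hsu hs'
  · rintro ((h | h | h | ⟨h0, h1, h2⟩) | h)
    · exact ⟨Finsupp.single 0 k, by simp, by simpa⟩
    · exact ⟨Finsupp.single 1 k, by simp, by simpa⟩
    · exact ⟨Finsupp.single 2 k, by simp, by simpa⟩
    · exact ⟨_, Or.inl (Or.inr (Or.inr (Or.inr rfl))), by
        rw [fs_le]; simp [Finsupp.single_apply, h0, h1, h2]⟩
    · rw [← hdeg] at h
      have hp : (monomial u (1:K)) ∈ idealOfVars (Fin 3) K ^ (k + α - 1) :=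
        (monomial_mem_pow_idealOfVars_iff _ _ one_ne_zero).2 h
      rw [pow_idealOfVars_eq_span, mem_ideal_span_monomial_image] at hp
      obtain ⟨s, hs, hsu⟩ := hp u (by simp)
      exact ⟨s, Or.inr hs, hsu⟩

theorem mu_ge {K : Type*} [Field K] {k α : ℕ} (L : Ideal (MvPolynomial (Fin 3) K))
    (hL : ∀ f, f ∈ L ↔ ∀ u ∈ f.support, EE k α u) :
    {u | Minimal (· ∈ {u | EE k α u}) u}.ncard ≤ mu L := by
  classical
  have hne : {n | ∃ s : Finset (MvPolynomial (Fin 3) K), s.card = n ∧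
      Ideal.span (s : Set (MvPolynomial (Fin 3) K)) = L}.Nonempty := by
    obtain ⟨s, hs⟩ := (isNoetherianRing_iff_ideal_fg _).1 inferInstance L
    exact ⟨s.card, s, rfl, hs⟩
  obtain ⟨s, hs, hsL⟩ := Nat.sInf_mem hne
  change s.card = mu L at hs
  rw [← hs]
  set G := {u | Minimal (· ∈ {u | EE k α u}) u} with hG
  have : Fintype G := (minE_finite k α).fintype
  let T : MvPolynomial (Fin 3) K →ₗ[K] (G → K) :=
    LinearMap.pi (fun u => lcoeff K u.1)
  have hT : ∀ f u, T f u = coeff u.1 f := fun f u => rfl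
  have hmul : ∀ p f, f ∈ L → T (p * f) = coeff 0 p • T f := by
    intro p f hf
    ext ⟨u, hu⟩
    rw [Pi.smul_apply, hT, hT, coeff_mul, smul_eq_mul]
    rw [Finset.sum_eq_single (0, u)]
    · rintro ⟨a, b⟩ hab hne
      rw [Finset.HasAntidiagonal.mem_antidiagonal] at hab
      simp only at hab ⊢
      by_contra hc
      have hb : b ∈ f.support := by rw [mem_support_iff]; exact right_ne_zero_of_mul hc
      have hEb := (hL f).1 hf b hb
      have hbu : b ≤ u := by rw [← hab]; exact le_add_self
      have : b = u := le_antisymm hbu (hu.2 hEb hbu)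
      subst this
      have : a = 0 := by simpa using hab
      exact hne (by rw [this])
    · intro h; simp at h
  have hspan : Submodule.span K (↑(s.image T) : Set (G → K)) = ⊤ := by
    rw [eq_top_iff]
    have h1 : ∀ f ∈ L, T f ∈ Submodule.span K (↑(s.image T) : Set (G → K)) := by
      intro f hf
      rw [← hsL] at hf
      have hsub : ∀ x ∈ s, x ∈ L := fun x hx => hsL ▸ Ideal.subset_span hx
      induction hf using Submodule.span_induction with
      | mem x hx => exact Submodule.subset_span (by simpa using ⟨x, hx, rfl⟩)
      | zero => simp
      | add x y _ _ hx hy => rw [map_add]; exact add_mem hx hy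
      | smul a x hx' hx =>
        rw [smul_eq_mul, hmul a x (hsL ▸ hx')]
        exact Submodule.smul_mem _ _ hx
    intro g _
    have : g = ∑ u : G, g u • T (monomial u.1 1) := by
      ext u
      rw [Finset.sum_apply, Finset.sum_eq_single u]
      · simp [hT]
      · intro b _ hb
        have : (b : Fin 3 →₀ ℕ) ≠ u := fun h => hb (Subtype.ext h)
        simp [hT, coeff_monomial, this]
      · simp
    rw [this]
    refine Submodule.sum_mem _ (fun u _ => Submodule.smul_mem _ _ (h1 _ ?_))
    rw [hL]
    intro v hv
    have : v = u := by
      have := support_monomial_subset hv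
      simpa using this
    rw [this]; exact u.2.1
  have h2 := finrank_span_finset_le_card (R := K) (s.image T)
  rw [Set.finrank, hspan, finrank_top, Module.finrank_fintype_fun_eq_card] at h2
  rw [Set.ncard_eq_toFinset_card', Set.toFinset_card]
  exact h2.trans Finset.card_image_le

theorem mu_le {K : Type*} [Field K] (J : Ideal (MvPolynomial (Fin 3) K))
    (M : Set (Fin 3 →₀ ℕ))
    (hM : M = {u | ∃ f ∈ J, f ≠ 0 ∧ MonomialOrder.lex.degree f = u})
    (hfin : {u | Minimal (· ∈ M) u}.Finite) :
    mu J ≤ {u | Minimal (· ∈ M) u}.ncard := by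
  classical
  have hch : ∀ u, ∃ f : MvPolynomial (Fin 3) K, u ∈ M →
      f ∈ J ∧ f ≠ 0 ∧ MonomialOrder.lex.degree f = u := by
    intro u
    by_cases h : u ∈ M
    · have h' := h
      rw [hM] at h'
      obtain ⟨f, hf⟩ := h'
      exact ⟨f, fun _ => hf⟩
    · exact ⟨0, fun h' => absurd h' h⟩
  choose g hg using hch
  have hspan : Ideal.span (↑(hfin.toFinset.image g) : Set (MvPolynomial (Fin 3) K)) = J := by
    apply le_antisymm
    · rw [Ideal.span_le]
      intro x hx
      simp only [Finset.coe_image, Set.Finite.coe_toFinset, Set.mem_image] at hx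
      obtain ⟨u, hu, rfl⟩ := hx
      exact (hg u hu.1).1
    · intro f hf
      obtain ⟨c, r, hfr, -, hr⟩ := MonomialOrder.div_set (m := MonomialOrder.lex)
        (B := (↑(hfin.toFinset.image g) : Set (MvPolynomial (Fin 3) K))) (by
          intro b hb
          simp only [Finset.coe_image, Set.Finite.coe_toFinset, Set.mem_image] at hb
          obtain ⟨u, hu, rfl⟩ := hb
          rw [isUnit_iff_ne_zero, MonomialOrder.leadingCoeff_ne_zero_iff]
          exact (hg u hu.1).2.1) f
      have hlc : Finsupp.linearCombination (MvPolynomial (Fin 3) K)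
          (fun (b : (↑(hfin.toFinset.image g) : Set (MvPolynomial (Fin 3) K))) ↦
            (b : MvPolynomial (Fin 3) K)) c ∈
          Ideal.span (↑(hfin.toFinset.image g) : Set (MvPolynomial (Fin 3) K)) := by
        rw [Finsupp.linearCombination_apply]
        exact Submodule.sum_mem _ (fun b _ => Submodule.smul_mem _ _ (Ideal.subset_span b.2))
      have hle : Ideal.span (↑(hfin.toFinset.image g) : Set (MvPolynomial (Fin 3) K)) ≤ J := by
        rw [Ideal.span_le]
        intro x hx
        simp only [Finset.coe_image, Set.Finite.coe_toFinset, Set.mem_image] at hx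
        obtain ⟨u, hu, rfl⟩ := hx
        exact (hg u hu.1).1
      have hrJ : r ∈ J := by
        have : r = f - Finsupp.linearCombination (MvPolynomial (Fin 3) K)
          (fun (b : (↑(hfin.toFinset.image g) : Set (MvPolynomial (Fin 3) K))) ↦
            (b : MvPolynomial (Fin 3) K)) c := by rw [hfr]; ring
        rw [this]
        exact sub_mem hf (hle hlc)
      have hr0 : r = 0 := by
        by_contra h0
        have hmem : MonomialOrder.lex.degree r ∈ M := by rw [hM]; exact ⟨r, hrJ, h0, rfl⟩
        obtain ⟨v, hvle, hv⟩ := (Set.isPWO_of_wellQuasiOrderedLE M).exists_le_minimal hmem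
        refine hr (MonomialOrder.lex.degree r) (MonomialOrder.degree_mem_support h0) (g v) ?_ ?_
        · simp only [Finset.coe_image, Set.Finite.coe_toFinset, Set.mem_image]
          exact ⟨v, hv, rfl⟩
        · rw [(hg v hv.1).2.2]; exact hvle
      rw [hfr, hr0, add_zero]
      exact hlc
  have h1 : mu J ≤ (hfin.toFinset.image g).card := Nat.sInf_le ⟨_, rfl, hspan⟩
  rw [Set.ncard_eq_toFinset_card _ hfin]
  exact h1.trans Finset.card_image_le

theorem rees {K : Type*} [Field K] {k α : ℕ} (hk : 2 * α + 3 ≤ k)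
    (L J : Ideal (MvPolynomial (Fin 3) K))
    (hL : ∀ f, f ∈ L ↔ ∀ u ∈ f.support, EE k α u) (hLJ : L ≤ J) : mu J ≤ mu L := by
  classical
  let M : Set (Fin 3 →₀ ℕ) := {u | ∃ f ∈ J, f ≠ 0 ∧ MonomialOrder.lex.degree f = u}
  have hE : ∀ u, EE k α u → u ∈ M := by
    intro u hu
    refine ⟨monomial u 1, hLJ ?_, by simp, ?_⟩
    · rw [hL]
      intro v hv
      have : v = u := by
        have := support_monomial_subset hv
        simpa using this
      rwa [this]
    · rw [MonomialOrder.degree_monomial]; simp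
  have hfin : {u | Minimal (· ∈ M) u}.Finite :=
    Set.Finite.of_injOn (psi_maps hk M hE) (psi_inj hk M hE) (minE_finite k α)
  calc mu J ≤ {u | Minimal (· ∈ M) u}.ncard := mu_le J M rfl hfin
    _ ≤ {u | Minimal (· ∈ {u | EE k α u}) u}.ncard :=
      Set.ncard_le_ncard_of_injOn _ (psi_maps hk M hE) (psi_inj hk M hE) (minE_finite k α)
    _ ≤ mu L := mu_ge L hL

def UU (k α n : ℕ) : Finset (ℕ × ℕ × ℕ) :=
  ((Finset.range k) ×ˢ (Finset.range k) ×ˢ (Finset.range k)).filter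
    (fun x => x.1 ≤ x.2.1 ∧ x.1 + x.2.1 + x.2.2 = n ∧ ¬ (α ≤ x.1 ∧ α ≤ x.2.2))

theorem mem_UU {k α n a b c : ℕ} : (a, b, c) ∈ UU k α n ↔
    (a < k ∧ b < k ∧ c < k) ∧ a ≤ b ∧ a + b + c = n ∧ ¬ (α ≤ a ∧ α ≤ c) := by
  simp [UU]

def theta (k α : ℕ) (x : ℕ × ℕ × ℕ) : ℕ × ℕ × ℕ :=
  if x.1 < x.2.1 then (x.1, x.2.1 - 1, x.2.2)
  else if x.2.2 < α then (α - 1 - x.2.2, k - 1, x.2.2)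
  else (α - 1 - (x.2.2 - (k - α + 1)), k - 1, x.2.2 - (k - α + 1))

theorem card_lt {k α : ℕ} (hkodd : Odd k) (hαodd : Odd α)
    (hkα : 2 * α + 3 ≤ k) (hα : 3 ≤ α) :
    (UU k α (k + α - 1)).card < (UU k α (k + α - 2)).card := by
  obtain ⟨k', hk'⟩ := hkodd
  obtain ⟨α', hα'⟩ := hαodd
  have hmem : (0, k - 1, α - 1) ∈ UU k α (k + α - 2) := by
    rw [mem_UU]; omega
  have h1 : (UU k α (k + α - 1)).card ≤ ((UU k α (k + α - 2)).erase (0, k - 1, α - 1)).card := by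
    apply Finset.card_le_card_of_injOn (theta k α)
    · rintro ⟨a, b, c⟩ h
      rw [Finset.mem_coe, mem_UU] at h
      rw [Finset.mem_coe, Finset.mem_erase]
      unfold theta
      dsimp only
      split_ifs with h1 h2
      · rw [mem_UU, ne_eq, Prod.mk.injEq, Prod.mk.injEq]; omega
      · rw [mem_UU, ne_eq, Prod.mk.injEq, Prod.mk.injEq]; omega
      · rw [mem_UU, ne_eq, Prod.mk.injEq, Prod.mk.injEq]; omega
    · rintro ⟨a, b, c⟩ h ⟨a', b', c'⟩ h' he
      rw [Finset.mem_coe, mem_UU] at h h'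
      unfold theta at he
      dsimp only at he
      rw [Prod.mk.injEq, Prod.mk.injEq]
      split_ifs at he <;> rw [Prod.mk.injEq, Prod.mk.injEq] at he <;> omega
  rw [Finset.card_erase_of_mem hmem] at h1
  have := Finset.card_pos.2 ⟨_, hmem⟩
  omega

def eqn {K : Type*} [Field K] (p q r : K) (f : ℕ → ℕ → ℕ → K) (a b c : ℕ) : K :=
  p * (if a = 0 then 0 else f (a - 1) b c) + q * (if b = 0 then 0 else f a (b - 1) c)
    + r * (if c = 0 then 0 else f a b (c - 1))

def PP (k α n a b c : ℕ) : Prop :=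
  a < k ∧ b < k ∧ c < k ∧ ¬ (α ≤ a ∧ α ≤ b ∧ α ≤ c) ∧ a + b + c = n

def KerP {K : Type*} [Field K] (k α : ℕ) (p q r : K) : Prop :=
  ∃ f : ℕ → ℕ → ℕ → K, (∃ a b c, f a b c ≠ 0) ∧
    (∀ a b c, f a b c ≠ 0 → PP k α (k + α - 2) a b c) ∧
    ∀ a b c, PP k α (k + α - 1) a b c → eqn p q r f a b c = 0

open Classical in
noncomputable def extF {K : Type*} [Field K] (U : Finset (ℕ × ℕ × ℕ)) :
    (U → K) →ₗ[K] (ℕ → ℕ → ℕ → K) where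
  toFun h a b c := if hx : (min a b, max a b, c) ∈ U then h ⟨_, hx⟩ else 0
  map_add' x y := by
    ext a b c
    simp only [Pi.add_apply]
    split_ifs <;> simp
  map_smul' t y := by
    ext a b c
    simp only [Pi.smul_apply, RingHom.id_apply]
    split_ifs <;> simp

noncomputable def eqnL {K : Type*} [Field K] (p q r : K) (a b c : ℕ) :
    (ℕ → ℕ → ℕ → K) →ₗ[K] K where
  toFun f := eqn p q r f a b c
  map_add' x y := by
    simp only [eqn, Pi.add_apply]
    split_ifs <;> ring
  map_smul' t y := by
    simp only [eqn, Pi.smul_apply, RingHom.id_apply, smul_eq_mul]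
    split_ifs <;> ring

theorem ker_sym {K : Type*} [Field K] {k α : ℕ} (hkodd : Odd k) (hαodd : Odd α)
    (hkα : 2 * α + 3 ≤ k) (hα : 3 ≤ α) (t r : K) : KerP k α t t r := by
  classical
  let U := UU k α (k + α - 2)
  let V := UU k α (k + α - 1)
  let T : (U → K) →ₗ[K] (V → K) :=
    LinearMap.pi (fun v => (eqnL t t r v.1.1 v.1.2.1 v.1.2.2).comp (extF U))
  have hker : LinearMap.ker T ≠ ⊥ := by
    apply LinearMap.ker_ne_bot_of_finrank_lt
    rw [Module.finrank_fintype_fun_eq_card, Module.finrank_fintype_fun_eq_card,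
      Fintype.card_coe, Fintype.card_coe]
    exact card_lt hkodd hαodd hkα hα
  obtain ⟨h, hh, hne⟩ := (Submodule.ne_bot_iff _).1 hker
  rw [LinearMap.mem_ker] at hh
  have hdef : ∀ a b c, extF U h a b c =
    if hx : (min a b, max a b, c) ∈ U then h ⟨_, hx⟩ else 0 := fun _ _ _ => rfl
  have hsym : ∀ a b c, extF U h a b c = extF U h b a c := by
    intro a b c
    rw [hdef, hdef]
    simp only [min_comm a b, max_comm a b]
  have hV : ∀ a b c, a ≤ b → PP k α (k + α - 1) a b c → eqn t t r (extF U h) a b c = 0 := by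
    intro a b c hab hP
    have hm : (a, b, c) ∈ V := by
      rw [mem_UU]; unfold PP at hP; omega
    exact congrFun hh ⟨_, hm⟩
  refine ⟨extF U h, ?_, ?_, ?_⟩
  · obtain ⟨⟨⟨a, b, c⟩, hx⟩, hx'⟩ := Function.ne_iff.1 hne
    refine ⟨a, b, c, ?_⟩
    have hab := (mem_UU.1 hx).2.1
    have hx2 : (min a b, max a b, c) ∈ U := by rwa [min_eq_left hab, max_eq_right hab]
    rw [hdef, dif_pos hx2]
    simpa only [min_eq_left hab, max_eq_right hab, Pi.zero_apply] using hx'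
  · intro a b c hf
    rw [hdef] at hf
    have hx : (min a b, max a b, c) ∈ U := by
      by_contra hc
      exact hf (dif_neg hc)
    rw [mem_UU] at hx
    unfold PP
    omega
  · intro a b c hP
    rcases le_total a b with hab | hab
    · exact hV a b c hab hP
    · rw [← hV b a c hab (by unfold PP at *; omega)]
      unfold eqn
      rw [hsym (a - 1) b c, hsym a (b - 1) c, hsym a b (c - 1)]
      ring

theorem ker_good {K : Type*} [Field K] {k α : ℕ} (hkodd : Odd k) (hαodd : Odd α)
    (hkα : 2 * α + 3 ≤ k) (hα : 3 ≤ α) (t P Q r : K) (hP : P ≠ 0) (hQ : Q ≠ 0) :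
    KerP k α (t * P) (t * Q) r := by
  obtain ⟨f, ⟨a, b, c, h1⟩, h2, h3⟩ := ker_sym hkodd hαodd hkα hα t r
  refine ⟨fun a b c => P ^ a * Q ^ b * f a b c, ⟨a, b, c, ?_⟩, ?_, ?_⟩
  · exact mul_ne_zero (mul_ne_zero (pow_ne_zero _ hP) (pow_ne_zero _ hQ)) h1
  · intro a b c h
    exact h2 a b c (right_ne_zero_of_mul h)
  · intro a b c h
    have h4 := h3 a b c h
    have : eqn (t * P) (t * Q) r (fun a b c => P ^ a * Q ^ b * f a b c) a b c
        = P ^ a * Q ^ b * eqn t t r f a b c := by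
      unfold eqn
      rcases a with _ | a <;> rcases b with _ | b <;>
        rcases c with _ | c <;> simp <;> ring
    rw [this, h4, mul_zero]

theorem ker_pair {K : Type*} [Field K] {k α : ℕ} (hkodd : Odd k) (hαodd : Odd α)
    (hkα : 2 * α + 3 ≤ k) (hα : 3 ≤ α) (p q r : K) (h : p = 0 ↔ q = 0) :
    KerP k α p q r := by
  by_cases hp : p = 0
  · have hq := h.1 hp
    have := ker_good (K := K) hkodd hαodd hkα hα 0 1 1 r one_ne_zero one_ne_zero
    simpa [hp, hq] using this
  · have hq : q ≠ 0 := fun hq => hp (h.2 hq)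
    have := ker_good (K := K) hkodd hαodd hkα hα 1 p q r hp hq
    simpa using this

theorem ker_all {K : Type*} [Field K] {k α : ℕ} (hkodd : Odd k) (hαodd : Odd α)
    (hkα : 2 * α + 3 ≤ k) (hα : 3 ≤ α) (p q r : K) : KerP k α p q r := by
  by_cases h : p = 0 ↔ q = 0
  · exact ker_pair hkodd hαodd hkα hα p q r h
  by_cases h' : p = 0 ↔ r = 0
  · obtain ⟨f, ⟨a, b, c, h1⟩, h2, h3⟩ := ker_pair hkodd hαodd hkα hα p r q h'
    refine ⟨fun a b c => f a c b, ⟨a, c, b, h1⟩, ?_, ?_⟩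
    · intro a b c hf
      have := h2 _ _ _ hf
      unfold PP at *; omega
    · intro a b c hP
      rw [← h3 a c b (by unfold PP at *; omega)]
      unfold eqn; ring
  · have h'' : q = 0 ↔ r = 0 := by tauto
    obtain ⟨f, ⟨a, b, c, h1⟩, h2, h3⟩ := ker_pair hkodd hαodd hkα hα q r p h''
    refine ⟨fun a b c => f b c a, ⟨c, a, b, h1⟩, ?_, ?_⟩
    · intro a b c hf
      have := h2 _ _ _ hf
      unfold PP at *; omega
    · intro a b c hP
      rw [← h3 b c a (by unfold PP at *; omega)]
      unfold eqn; ring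

theorem inI_pred {k α : ℕ} (hkα : 2 * α + 3 ≤ k) (hα : 3 ≤ α) {u : Fin 3 →₀ ℕ}
    (hu : InI k α u) (hd : u 0 + u 1 + u 2 = k + α - 1) :
    ∃ (i : Fin 3) (v : Fin 3 →₀ ℕ), u = Finsupp.single i 1 + v ∧ InI k α v := by
  have : ∃ i, 1 ≤ u i ∧ InI k α (u - Finsupp.single i 1) := by
    by_contra hc
    push Not at hc
    have h0 := hc 0
    have h1 := hc 1
    have h2 := hc 2
    simp [InI] at h0 h1 h2
    unfold InI at hu
    omega
  obtain ⟨i, hi, hI⟩ := this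
  refine ⟨i, u - Finsupp.single i 1, ?_, hI⟩
  rw [add_comm, tsub_add_cancel_of_le]
  simpa using hi

theorem not_mfull {K : Type*} [Field K] {k α : ℕ} (hkodd : Odd k) (hαodd : Odd α)
    (hkα : 2 * α + 3 ≤ k) (hα : 3 ≤ α) (L : Ideal (MvPolynomial (Fin 3) K))
    (hL : ∀ f, f ∈ L ↔ ∀ u ∈ f.support, EE k α u) : ¬ IsMFull (mm K 3) L := by
  classical
  rintro ⟨y, hy, hcol⟩
  have hdeg : ∀ u : Fin 3 →₀ ℕ, Finsupp.degree u = u 0 + u 1 + u 2 := by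
    intro u
    rw [Finsupp.degree_eq_sum]
    simp [Fin.sum_univ_three]
  have hmon : ∀ u (c : K), EE k α u → monomial u c ∈ L := by
    intro u c hu
    rw [hL]
    intro v hv
    have : v = u := by
      have := support_monomial_subset hv
      simpa using this
    rwa [this]
  let w : Fin 3 → K := fun i => coeff (Finsupp.single i 1) y
  obtain ⟨f, ⟨a, b, c, h1⟩, h2, h3⟩ := ker_all hkodd hαodd hkα hα (w 0) (w 1) (w 2)
  let B : Fin 3 →₀ ℕ := Finsupp.equivFunOnFinite.symm (fun _ => k)
  let F : MvPolynomial (Fin 3) K := ∑ u ∈ Finset.Iic B, monomial u (f (u 0) (u 1) (u 2))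
  have hF : ∀ u, coeff u F = f (u 0) (u 1) (u 2) := by
    intro u
    simp only [F, coeff_sum, coeff_monomial]
    rw [Finset.sum_ite_eq']
    split_ifs with hu
    · rfl
    · by_contra hc
      have := h2 _ _ _ (Ne.symm hc)
      apply hu
      rw [Finset.mem_Iic, fs_le]
      unfold PP at this
      simp [B]
      omega
  have hFm : F ∈ idealOfVars (Fin 3) K ^ (k + α - 2) := by
    rw [mem_pow_idealOfVars_iff]
    intro u hu
    rw [mem_support_iff, hF] at hu
    have := h2 _ _ _ hu
    unfold PP at this
    rw [hdeg]; omega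
  have hnot : F ∉ L := by
    intro hFL
    let u : Fin 3 →₀ ℕ := Finsupp.equivFunOnFinite.symm ![a, b, c]
    have hu : u ∈ F.support := by
      rw [mem_support_iff, hF]
      simpa [u] using h1
    have hEu := (hL F).1 hFL u hu
    have := h2 _ _ _ h1
    unfold PP at this
    simp [EE, InI, u] at hEu
    omega
  apply hnot
  rw [← hcol, Ideal.mem_colon_span_singleton]
  let l : MvPolynomial (Fin 3) K := ∑ i, C (w i) * X i
  have hcl : ∀ u, coeff u (F * l) = eqn (w 0) (w 1) (w 2) f (u 0) (u 1) (u 2) := by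
    intro u
    have : F * l = C (w 0) * (F * X 0) + C (w 1) * (F * X 1) + C (w 2) * (F * X 2) := by
      simp only [l, Fin.sum_univ_three]; ring
    rw [this, coeff_add, coeff_add, coeff_C_mul, coeff_C_mul, coeff_C_mul,
      coeff_mul_X', coeff_mul_X', coeff_mul_X', hF, hF, hF]
    simp [eqn]
  have hl : F * l ∈ mm K 3 * L := by
    rw [(F * l).as_sum]
    refine Submodule.sum_mem _ (fun u hu => ?_)
    rw [mem_support_iff] at hu
    generalize hcc : coeff u (F * l) = cc
    have hd : u 0 + u 1 + u 2 = k + α - 1 := by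
      rw [hcl] at hu
      unfold eqn at hu
      by_contra hc
      apply hu
      have z : ∀ a b c, a + b + c + 1 ≠ k + α - 1 → f a b c = 0 := by
        intro a b c hne
        by_contra h0
        have := h2 _ _ _ h0
        unfold PP at this
        omega
      have z0 : (if u 0 = 0 then 0 else f (u 0 - 1) (u 1) (u 2)) = 0 := by
        split_ifs with hh
        · rfl
        · exact z _ _ _ (by omega)
      have z1 : (if u 1 = 0 then 0 else f (u 0) (u 1 - 1) (u 2)) = 0 := by
        split_ifs with hh
        · rfl
        · exact z _ _ _ (by omega)
      have z2 : (if u 2 = 0 then 0 else f (u 0) (u 1) (u 2 - 1)) = 0 := by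
        split_ifs with hh
        · rfl
        · exact z _ _ _ (by omega)
      rw [z0, z1, z2]; ring
    have hI : InI k α u := by
      by_contra hc
      apply hu
      rw [hcl]
      apply h3
      unfold InI at hc
      unfold PP
      omega
    obtain ⟨i, v, rfl, hv⟩ := inI_pred hkα hα hI hd
    have : monomial (Finsupp.single i 1 + v) cc = (X i : MvPolynomial (Fin 3) K) * monomial v cc := by
      rw [X, monomial_mul, one_mul]
    rw [this]
    exact Ideal.mul_mem_mul (Ideal.subset_span ⟨i, rfl⟩) (hmon _ _ (Or.inl hv))
  have hy2 : y - l ∈ idealOfVars (Fin 3) K ^ 2 := by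
    rw [mem_pow_idealOfVars_iff']
    intro u hu
    rw [hdeg] at hu
    have hcu : coeff u l = ∑ i, w i * (if Finsupp.single i 1 = u then 1 else 0) := by
      simp only [l, coeff_sum, coeff_C_mul, coeff_X']
    rw [coeff_sub, hcu]
    by_cases h0 : u 0 + u 1 + u 2 = 0
    · have hu0 : u = 0 := fs_ext (by simp; omega) (by simp; omega) (by simp; omega)
      have hy0 : coeff 0 y = 0 := by
        have hy' : y ∈ idealOfVars (Fin 3) K ^ 1 := by rw [pow_one]; exact hy
        rw [mem_pow_idealOfVars_iff'] at hy'
        exact hy' 0 (by simp)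
      simp [hu0, hy0]
    · obtain ⟨i, v, rfl⟩ := exists_pred (u := u) (by omega)
      have hs : (Finsupp.single i 1 + v : Fin 3 →₀ ℕ) 0 + (Finsupp.single i 1 + v : Fin 3 →₀ ℕ) 1
        + (Finsupp.single i 1 + v : Fin 3 →₀ ℕ) 2 = 1 + (v 0 + v 1 + v 2) := by
        fin_cases i <;> simp [Finsupp.single_apply] <;> ring
      have hv0 : v = 0 := fs_ext (by simp; omega) (by simp; omega) (by simp; omega)
      subst hv0
      simp [Finsupp.single_left_inj, w]
  have hle : idealOfVars (Fin 3) K ^ (k + α - 1) ≤ L := by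
    intro g hg
    rw [mem_pow_idealOfVars_iff] at hg
    rw [hL]
    intro u hu
    have := hg u hu
    rw [hdeg] at this
    exact Or.inr this
  have hq : F * (y - l) ∈ mm K 3 * L := by
    have := Ideal.mul_mem_mul hFm hy2
    rw [← pow_add, show k + α - 2 + 2 = 1 + (k + α - 1) by omega, pow_add, pow_one] at this
    exact Ideal.mul_mono_right hle this
  have : F * y = F * l + F * (y - l) := by ring
  rw [this]
  exact add_mem hl hq

/-- For odd integers `k ≥ 2α+3` and `α ≥ 3`, the ideal
`(x₁^k, x₂^k, x₃^k, x₁^α x₂^α x₃^α) + m^{k+α-1}` of `K[x₁,x₂,x₃]`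
has the Rees property but is not `m`-full. -/
theorem stmt12 {K : Type*} [Field K] (k α : ℕ) (hkodd : Odd k) (hαodd : Odd α)
    (hkα : 2 * α + 3 ≤ k) (hα : 3 ≤ α) :
    (∀ J : Ideal (MvPolynomial (Fin 3) K), IsHomog J →
        Ideal.span {X 0 ^ k, X 1 ^ k, X 2 ^ k, X 0 ^ α * X 1 ^ α * X 2 ^ α}
          + mm K 3 ^ (k + α - 1) ≤ J →
        mu J ≤ mu (Ideal.span {X 0 ^ k, X 1 ^ k, X 2 ^ k, X 0 ^ α * X 1 ^ α * X 2 ^ α}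
          + mm K 3 ^ (k + α - 1)))
    ∧ ¬ IsMFull (mm K 3)
        (Ideal.span {X 0 ^ k, X 1 ^ k, X 2 ^ k, X 0 ^ α * X 1 ^ α * X 2 ^ α}
          + mm K 3 ^ (k + α - 1)) := by
  refine ⟨fun J _ hJ => rees hkα _ J (mem_L hkα) hJ, ?_⟩
  exact not_mfull hkodd hαodd hkα hα _ (mem_L hkα)
end
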